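/- arXiv:1206.1636 — 10 statements merged into one kernel-verified Lean document; each statement's English description precedes it below -/
import Mathlib

section
/- Let φ = (1+√5)/2 be the golden ratio. The set 𝔸 equals the union of the three sets: {(ξ,ξ,ξ) : ξ ∈ ℝ}; {(−ξ, 2−ξ, ξ), (ξ, −ξ, 2−ξ), (2−ξ, ξ, −ξ) : ξ ∈ ℝ \ {−φ⁻¹, φ}}; and {(1/(1−ξ), 1 − 1/ξ, ξ), (ξ, 1/(1−ξ), 1 − 1/ξ), (1 − 1/ξ, ξ, 1/(1−ξ)) : ξ ∈ (φ, φ²)}. -/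
/-!
Put `u = AA_ρ`, `v = BB_σ`, `w = CC_τ` and `D ρ σ = 1 - σ + ρ * σ`. The determinants of `(u, v)`,
`(v, w)`, `(w, u)` in the basis `(BC, BA)` are `D ρ σ`, `D σ τ`, `D τ ρ`, so that
`D σ τ • u + D τ ρ • v + D ρ σ • w = 0`.

When the triangle degenerates so that `A` meets `A_ρ` on a line with `BC = 1`, the cevians have
lengths `0`, `|D ρ σ|`, `|D τ ρ|`. By continuity these are the sides of a possibly degenerate
triangle, hence `|D ρ σ| = |D τ ρ|`, and cyclically all three determinants agree up to sign.

If they are nonzero, the relation becomes `u ± v ± w = 0`: the cevian vectors close up to a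
triangle whose area is `|D ρ σ|` times that of `ABC`, and comparing coefficients gives the first two
families. The golden ratio enters through the zeros of `D ξ (-ξ) = 1 + ξ - ξ ^ 2`.

If they vanish, the three cevians are parallel, `σ = 1 / (1 - ρ)` and `τ = 1 - 1 / ρ`. One of the
three parameters then exceeds `1`; if it is `ρ`, the cevian lengths are in the ratio
`ρ * (ρ - 1) : ρ : ρ - 1`, and these are the sides of a triangle exactly when `φ < ρ < φ ^ 2`.
-/

/-- The set of side-length triples of non-degenerate triangles. -/
def T : Set (ℝ × ℝ × ℝ) :=
  {p | |p.1 - p.2.1| < p.2.2 ∧ p.2.2 < p.1 + p.2.1}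

/-- The cevian length `f a b c ρ = AA_ρ`. -/
noncomputable def f (a b c ρ : ℝ) : ℝ :=
  Real.sqrt (ρ * (ρ - 1) * a ^ 2 + ρ * b ^ 2 + (1 - ρ) * c ^ 2)

/-- The set of parameter triples `(ρ, σ, τ)` for which the three cevians form a
triangle for every triangle. -/
def A : Set (ℝ × ℝ × ℝ) :=
  {p | ∀ a b c : ℝ, (a, b, c) ∈ T →
    (f a b c p.1, f b c a p.2.1, f c a b p.2.2) ∈ T}

/-- The golden ratio. -/
noncomputable def phi : ℝ := (1 + Real.sqrt 5) / 2

namespace Ceva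

/-- Relation of a triple to its cyclic rotations. The disjuncts are ordered so that the families in
the theorem are, by definition, the rotations of their middle members. -/
def IsRotation {α : Type*} (p q : α × α × α) : Prop :=
  p = (q.2.1, q.2.2, q.1) ∨ p = q ∨ p = (q.2.2, q.1, q.2.1)

/-- Heron's form: sixteen times the squared area of a triangle with squared sides `x, y, z`. -/
def heron (x y z : ℝ) : ℝ :=
  2 * (x * y + y * z + z * x) - x ^ 2 - y ^ 2 - z ^ 2

/-- Stewart's expression for the squared cevian `AA_ρ` in terms of the squared sides. -/
def cevianSq (x y z ρ : ℝ) : ℝ :=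
  ρ * (ρ - 1) * x + ρ * y + (1 - ρ) * z

/-- The determinant `D ρ σ` of the vectors `AA_ρ, BB_σ` in the basis `BC, BA`; cyclically,
`D σ τ` is that of `BB_σ, CC_τ` and `D τ ρ` that of `CC_τ, AA_ρ`, in the same basis. -/
def cevianDet (ρ σ : ℝ) : ℝ :=
  1 - σ + ρ * σ

variable {a b c x y z ξ ρ σ τ : ℝ}

lemma pos_of_mem_T (h : (a, b, c) ∈ T) : 0 < a ∧ 0 < b ∧ 0 < c := by
  simp only [T, Set.mem_ofPred_eq, abs_lt] at h
  obtain ⟨⟨h₁, h₂⟩, h₃⟩ := h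
  exact ⟨by linarith, by linarith, by linarith⟩

lemma equilateral_mem_T : ((1, 1, 1) : ℝ × ℝ × ℝ) ∈ T := by
  norm_num [T]

lemma rotate_mem_T (h : (a, b, c) ∈ T) : (b, c, a) ∈ T := by
  simp only [T, Set.mem_ofPred_eq, abs_lt] at h ⊢
  obtain ⟨⟨h₁, h₂⟩, h₃⟩ := h
  exact ⟨⟨by linarith, by linarith⟩, by linarith⟩

lemma mul_mem_T_iff {k : ℝ} (hk : 0 < k) : (k * a, k * b, k * c) ∈ T ↔ (a, b, c) ∈ T := by
  simp only [T, Set.mem_ofPred_eq, ← mul_sub, ← mul_add, abs_mul, abs_of_pos hk,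
    mul_lt_mul_iff_right₀ hk]

lemma mem_T_iff_heron_pos (ha : 0 ≤ a) (hb : 0 ≤ b) (hc : 0 ≤ c) :
    (a, b, c) ∈ T ↔ 0 < heron (a ^ 2) (b ^ 2) (c ^ 2) := by
  have factor : heron (a ^ 2) (b ^ 2) (c ^ 2) =
      (c ^ 2 - (a - b) ^ 2) * ((a + b) ^ 2 - c ^ 2) := by
    unfold heron; ring
  have sq_sub_le : (a - b) ^ 2 ≤ (a + b) ^ 2 := by linarith [mul_nonneg ha hb]
  simp only [T, Set.mem_ofPred_eq]
  rw [factor, ← sq_lt_sq₀ (abs_nonneg _) hc, sq_abs, ← sq_lt_sq₀ hc (add_nonneg ha hb),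
    mul_pos_iff, sub_pos, sub_pos, sub_neg, sub_neg]
  exact ⟨Or.inl, fun h ↦ h.resolve_right fun h' ↦ by linarith⟩

lemma closure_T : closure T = {p | |p.1 - p.2.1| ≤ p.2.2 ∧ p.2.2 ≤ p.1 + p.2.1} := by
  apply subset_antisymm
  · have hclosed₁ : IsClosed {p : ℝ × ℝ × ℝ | |p.1 - p.2.1| ≤ p.2.2} :=
      isClosed_le (by fun_prop) (by fun_prop)
    have hclosed₂ : IsClosed {p : ℝ × ℝ × ℝ | p.2.2 ≤ p.1 + p.2.1} :=
      isClosed_le (by fun_prop) (by fun_prop)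
    exact closure_minimal (fun p hp ↦ ⟨hp.1.le, hp.2.le⟩) (hclosed₁.inter hclosed₂)
  · rintro ⟨a, b, c⟩ ⟨h₁, h₂⟩
    have hlim : Filter.Tendsto (fun ε : ℝ ↦ (a + ε, b + ε, c + ε)) (nhdsWithin 0 (Set.Ioi 0))
        (nhds (a, b, c)) :=
      tendsto_nhdsWithin_of_tendsto_nhds <| Continuous.tendsto' (by fun_prop) _ _ (by simp)
    refine mem_closure_of_tendsto hlim ?_
    filter_upwards [self_mem_nhdsWithin] with ε (hε : 0 < ε)
    simp only at h₁ h₂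
    refine ⟨?_, ?_⟩ <;> simp only [add_sub_add_right_eq_sub] <;> linarith

lemma cevianSq_pos (hx : 0 < x) (h : 0 < heron x y z) (ρ : ℝ) : 0 < cevianSq x y z ρ := by
  have complete_square :
      x * cevianSq x y z ρ = (ρ * x + (y - z - x) / 2) ^ 2 + heron x y z / 4 := by
    unfold cevianSq heron; ring
  refine pos_of_mul_pos_right (a := x) ?_ hx.le
  rw [complete_square]
  positivity

lemma cevianSq_pos_of_mem_T (h : (a, b, c) ∈ T) (ρ : ℝ) :
    0 < cevianSq (a ^ 2) (b ^ 2) (c ^ 2) ρ := by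
  obtain ⟨ha, hb, hc⟩ := pos_of_mem_T h
  exact cevianSq_pos (by positivity) ((mem_T_iff_heron_pos ha.le hb.le hc.le).1 h) ρ

lemma f_sq (h : (a, b, c) ∈ T) (ρ : ℝ) : f a b c ρ ^ 2 = cevianSq (a ^ 2) (b ^ 2) (c ^ 2) ρ :=
  Real.sq_sqrt (cevianSq_pos_of_mem_T h ρ).le

lemma f_pos (h : (a, b, c) ∈ T) (ρ : ℝ) : 0 < f a b c ρ :=
  Real.sqrt_pos.2 (cevianSq_pos_of_mem_T h ρ)

lemma cevians_mem_T_iff (h : (a, b, c) ∈ T) :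
    (f a b c ρ, f b c a σ, f c a b τ) ∈ T ↔
      0 < heron (cevianSq (a ^ 2) (b ^ 2) (c ^ 2) ρ) (cevianSq (b ^ 2) (c ^ 2) (a ^ 2) σ)
        (cevianSq (c ^ 2) (a ^ 2) (b ^ 2) τ) := by
  have h' := rotate_mem_T h
  have h'' := rotate_mem_T h'
  rw [mem_T_iff_heron_pos (f_pos h ρ).le (f_pos h' σ).le (f_pos h'' τ).le, f_sq h, f_sq h',
    f_sq h'']

lemma rotate_mem_A (h : (ρ, σ, τ) ∈ A) : (σ, τ, ρ) ∈ A := fun a b c hT ↦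
  rotate_mem_T (h c a b (rotate_mem_T (rotate_mem_T hT)))

lemma IsRotation.mem_A_iff {p q : ℝ × ℝ × ℝ} (h : IsRotation p q) : p ∈ A ↔ q ∈ A := by
  rcases h with rfl | rfl | rfl
  · exact ⟨fun h ↦ rotate_mem_A (rotate_mem_A h), rotate_mem_A⟩
  · rfl
  · exact ⟨rotate_mem_A, fun h ↦ rotate_mem_A (rotate_mem_A h)⟩

lemma cevians_mem_closure_T (hA : (ρ, σ, τ) ∈ A) (h : (a, b, c) ∈ closure T) :
    (f a b c ρ, f b c a σ, f c a b τ) ∈ closure T := by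
  let cevians (t : ℝ × ℝ × ℝ) : ℝ × ℝ × ℝ :=
    (f t.1 t.2.1 t.2.2 ρ, f t.2.1 t.2.2 t.1 σ, f t.2.2 t.1 t.2.1 τ)
  have hcont : Continuous cevians := by
    unfold cevians f; fun_prop
  exact map_mem_closure (f := cevians) hcont h fun t ht ↦ hA t.1 t.2.1 t.2.2 ht

lemma abs_cevianDet_eq (hA : (ρ, σ, τ) ∈ A) : |cevianDet ρ σ| = |cevianDet τ ρ| := by
  have degenerate : (1, |1 - ρ|, |ρ|) ∈ closure T := by
    rw [closure_T]
    constructor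
    · simpa using abs_abs_sub_abs_le 1 (1 - ρ)
    · simpa [abs_sub_comm ρ 1] using abs_add_le 1 (ρ - 1)
  have hf₁ : f 1 |1 - ρ| |ρ| ρ = 0 :=
    Real.sqrt_eq_zero'.2 (by simp only [sq_abs]; exact le_of_eq (by ring))
  have hf₂ : f |1 - ρ| |ρ| 1 σ = |cevianDet ρ σ| := by
    rw [f, ← Real.sqrt_sq_eq_abs (cevianDet ρ σ)]
    simp only [sq_abs, cevianDet]
    congr 1
    ring
  have hf₃ : f |ρ| 1 |1 - ρ| τ = |cevianDet τ ρ| := by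
    rw [f, ← Real.sqrt_sq_eq_abs (cevianDet τ ρ)]
    simp only [sq_abs, cevianDet]
    congr 1
    ring
  have hmem := cevians_mem_closure_T hA degenerate
  rw [hf₁, hf₂, hf₃, closure_T] at hmem
  simp only [Set.mem_ofPred_eq, zero_sub, abs_neg, abs_abs, zero_add] at hmem
  exact le_antisymm hmem.1 hmem.2

-- The `BA` component of `D σ τ • u + D τ ρ • v + D ρ σ • w = 0`.
lemma cevianDet_eq_combination (ρ σ τ : ℝ) :
    cevianDet σ τ = σ * cevianDet τ ρ + (1 - τ) * cevianDet ρ σ := by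
  unfold cevianDet; ring

lemma eq_of_cevianDet_eq (h₀ : cevianDet ρ σ ≠ 0) (h₁ : cevianDet σ τ = cevianDet ρ σ)
    (h₂ : cevianDet τ ρ = cevianDet ρ σ) : σ = ρ ∧ τ = ρ := by
  have e₁ := cevianDet_eq_combination ρ σ τ
  have e₂ := cevianDet_eq_combination σ τ ρ
  rw [h₁, h₂] at e₁ e₂
  have hστ : σ = τ := mul_right_cancel₀ h₀ (by linear_combination -e₁)
  have hτρ : τ = ρ := mul_right_cancel₀ h₀ (by linear_combination -e₂)
  exact ⟨hστ.trans hτρ, hτρ⟩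

lemma eq_of_cevianDet_eq_neg (h₀ : cevianDet ρ σ ≠ 0) (h₁ : cevianDet σ τ = -cevianDet ρ σ)
    (h₂ : cevianDet τ ρ = cevianDet ρ σ) : (ρ, σ, τ) = (ρ, -ρ, 2 - ρ) := by
  have e₂ := cevianDet_eq_combination σ τ ρ
  have e₃ := cevianDet_eq_combination τ ρ σ
  rw [h₁, h₂] at e₂ e₃
  have hσ : σ = -ρ := mul_right_cancel₀ h₀ (by linear_combination e₃)
  have hτ : τ = 2 - ρ := mul_right_cancel₀ h₀ (by linear_combination -e₂)
  rw [hσ, hτ]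

lemma eq_of_cevianDet_eq_zero (h₁ : cevianDet ρ σ = 0) (h₂ : cevianDet τ ρ = 0) :
    (ρ, σ, τ) = (ρ, 1 / (1 - ρ), 1 - 1 / ρ) := by
  unfold cevianDet at h₁ h₂
  have hρ : ρ ≠ 0 := by rintro rfl; norm_num at h₂
  have hρ' : 1 - ρ ≠ 0 := by
    intro h
    obtain rfl : ρ = 1 := by linarith
    norm_num at h₁
  have hσ : σ = 1 / (1 - ρ) := by rw [eq_div_iff hρ']; linear_combination -h₁
  have hτ : τ = 1 - 1 / ρ := by field_simp; linear_combination h₂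
  rw [hσ, hτ]

lemma one_lt_of_cevianDet_eq_zero (h₁ : cevianDet ρ σ = 0) (h₂ : cevianDet τ ρ = 0) :
    1 < ρ ∨ 1 < σ ∨ 1 < τ := by
  unfold cevianDet at h₁ h₂
  by_contra! h
  obtain ⟨hρ, hσ, hτ⟩ := h
  have hσ₀ : 0 < σ := pos_of_mul_pos_left (b := 1 - ρ) (by linarith) (by linarith)
  have hρ₀ : 0 < ρ := pos_of_mul_pos_left (b := 1 - τ) (by linarith) (by linarith)
  linarith [mul_pos hρ₀ hσ₀]

lemma exists_isRotation_of_cevianDet_eq_zero (h₁ : cevianDet ρ σ = 0) (h₂ : cevianDet σ τ = 0)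
    (h₃ : cevianDet τ ρ = 0) :
    ∃ ξ, 1 < ξ ∧ IsRotation (ρ, σ, τ) (ξ, 1 / (1 - ξ), 1 - 1 / ξ) := by
  rcases one_lt_of_cevianDet_eq_zero h₁ h₃ with hρ | hσ | hτ
  · exact ⟨ρ, hρ, .inr (.inl (eq_of_cevianDet_eq_zero h₁ h₃))⟩
  · refine ⟨σ, hσ, ?_⟩
    rw [← eq_of_cevianDet_eq_zero h₂ h₁]
    exact .inr (.inr rfl)
  · refine ⟨τ, hτ, ?_⟩
    rw [← eq_of_cevianDet_eq_zero h₃ h₂]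
    exact .inl rfl

lemma diag_or_isRotation_of_mem_A (h : (ρ, σ, τ) ∈ A) :
    (∃ ξ, (ρ, σ, τ) = (ξ, ξ, ξ)) ∨ (∃ ξ, IsRotation (ρ, σ, τ) (ξ, -ξ, 2 - ξ)) ∨
      ∃ ξ, 1 < ξ ∧ IsRotation (ρ, σ, τ) (ξ, 1 / (1 - ξ), 1 - 1 / ξ) := by
  have h₃ : |cevianDet τ ρ| = |cevianDet ρ σ| := (abs_cevianDet_eq h).symm
  have h₂ : |cevianDet σ τ| = |cevianDet ρ σ| := abs_cevianDet_eq (rotate_mem_A h)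
  by_cases h₁ : cevianDet ρ σ = 0
  · rw [h₁, abs_zero, abs_eq_zero] at h₂ h₃
    exact .inr (.inr (exists_isRotation_of_cevianDet_eq_zero h₁ h₂ h₃))
  rcases abs_eq_abs.1 h₂ with h₂ | h₂ <;> rcases abs_eq_abs.1 h₃ with h₃ | h₃
  · obtain ⟨rfl, rfl⟩ := eq_of_cevianDet_eq h₁ h₂ h₃
    exact .inl ⟨_, rfl⟩
  · refine .inr (.inl ⟨σ, ?_⟩)
    rw [← eq_of_cevianDet_eq_neg (h₂ ▸ h₁) (h₃.trans (congrArg _ h₂.symm)) h₂.symm]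
    exact .inr (.inr rfl)
  · exact .inr (.inl ⟨ρ, .inr (.inl (eq_of_cevianDet_eq_neg h₁ h₂ h₃))⟩)
  · refine .inr (.inl ⟨τ, ?_⟩)
    rw [← eq_of_cevianDet_eq_neg (ρ := τ) (by rwa [h₃, neg_ne_zero]) (by rw [h₃, neg_neg])
      (h₂.trans h₃.symm)]
    exact .inl rfl

lemma mem_A_iff_ne_zero_of_heron_eq {k : ℝ}
    (hk : ∀ x y z, heron (cevianSq x y z ρ) (cevianSq y z x σ) (cevianSq z x y τ) =
      k ^ 2 * heron x y z) :
    (ρ, σ, τ) ∈ A ↔ k ≠ 0 := by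
  constructor
  · rintro h rfl
    simpa [hk] using (cevians_mem_T_iff equilateral_mem_T).1 (h 1 1 1 equilateral_mem_T)
  · intro hk₀ a b c hT
    obtain ⟨ha, hb, hc⟩ := pos_of_mem_T hT
    have := (mem_T_iff_heron_pos ha.le hb.le hc.le).1 hT
    rw [cevians_mem_T_iff hT, hk]
    positivity

lemma diag_mem_A (ξ : ℝ) : (ξ, ξ, ξ) ∈ A := by
  rw [mem_A_iff_ne_zero_of_heron_eq (k := cevianDet ξ ξ)
    fun x y z ↦ by unfold heron cevianSq cevianDet; ring]
  have complete_square : cevianDet ξ ξ = (ξ - 1 / 2) ^ 2 + 3 / 4 := by unfold cevianDet; ring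
  rw [complete_square]
  positivity

lemma phi_sq : phi ^ 2 = phi + 1 := Real.goldenRatio_sq

lemma one_lt_phi : 1 < phi := Real.one_lt_goldenRatio

lemma inv_phi : phi⁻¹ = phi - 1 :=
  inv_eq_of_mul_eq_one_right (by linear_combination phi_sq)

lemma cevianDet_neg_right_eq (ξ : ℝ) : cevianDet ξ (-ξ) = -((ξ + phi⁻¹) * (ξ - phi)) := by
  rw [inv_phi, cevianDet]
  linear_combination -phi_sq

lemma neg_two_sub_mem_A_iff : (ξ, -ξ, 2 - ξ) ∈ A ↔ ξ ≠ -phi⁻¹ ∧ ξ ≠ phi := by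
  rw [mem_A_iff_ne_zero_of_heron_eq (k := cevianDet ξ (-ξ))
      fun x y z ↦ by unfold heron cevianSq cevianDet; ring,
    cevianDet_neg_right_eq, neg_ne_zero, mul_ne_zero_iff, sub_ne_zero, ne_eq,
    add_eq_zero_iff_eq_neg]

lemma f_one_div_one_sub (hξ : ξ ≠ 1) (a b c : ℝ) :
    f b c a (1 / (1 - ξ)) = f a b c ξ / |1 - ξ| := by
  have h : 1 - ξ ≠ 0 := sub_ne_zero.2 hξ.symm
  rw [f, f, ← Real.sqrt_sq_eq_abs, ← Real.sqrt_div' _ (sq_nonneg _)]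
  congr 1
  field_simp
  ring

lemma f_one_sub_one_div (hξ : ξ ≠ 0) (a b c : ℝ) :
    f c a b (1 - 1 / ξ) = f a b c ξ / |ξ| := by
  rw [f, f, ← Real.sqrt_sq_eq_abs, ← Real.sqrt_div' _ (sq_nonneg _)]
  congr 1
  field_simp
  ring

lemma mul_sub_one_mem_T_iff (hξ : 1 < ξ) :
    (ξ * (ξ - 1), ξ, ξ - 1) ∈ T ↔ ξ ∈ Set.Ioo phi (phi ^ 2) := by
  have hφ := one_lt_phi
  have lower : phi < ξ ↔ 0 < ξ ^ 2 - ξ - 1 := by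
    rw [show ξ ^ 2 - ξ - 1 = (ξ + (phi - 1)) * (ξ - phi) by linear_combination phi_sq,
      mul_pos_iff_of_pos_left (by linarith), sub_pos]
  have upper : ξ < phi ^ 2 ↔ ξ ^ 2 - 3 * ξ + 1 < 0 := by
    rw [show ξ ^ 2 - 3 * ξ + 1 = -((ξ - 1 + (phi - 1)) * (phi ^ 2 - ξ)) by
        linear_combination (ξ - 1 + phi) * phi_sq,
      neg_lt_zero, mul_pos_iff_of_pos_left (by linarith), sub_pos]
  rw [Set.mem_Ioo, lower, upper]
  simp only [T, Set.mem_ofPred_eq, abs_lt]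
  constructor
  · rintro ⟨⟨h₁, h₂⟩, -⟩
    constructor <;> linarith
  · rintro ⟨h₁, h₂⟩
    refine ⟨⟨?_, ?_⟩, ?_⟩ <;> linarith

lemma one_div_mem_A_iff (hξ : 1 < ξ) :
    (ξ, 1 / (1 - ξ), 1 - 1 / ξ) ∈ A ↔ ξ ∈ Set.Ioo phi (phi ^ 2) := by
  have h₀ : 0 < ξ := one_pos.trans hξ
  have h₁ : 0 < ξ - 1 := sub_pos.2 hξ
  have cevians_mem_iff {a b c : ℝ} (h : (a, b, c) ∈ T) :
      (f a b c ξ, f b c a (1 / (1 - ξ)), f c a b (1 - 1 / ξ)) ∈ T ↔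
        (ξ * (ξ - 1), ξ, ξ - 1) ∈ T := by
    have hk : 0 < f a b c ξ / (ξ * (ξ - 1)) := div_pos (f_pos h ξ) (mul_pos h₀ h₁)
    rw [f_one_div_one_sub hξ.ne', f_one_sub_one_div h₀.ne', abs_sub_comm, abs_of_pos h₁,
      abs_of_pos h₀, ← mul_mem_T_iff hk (b := ξ)]
    field_simp
  rw [← mul_sub_one_mem_T_iff hξ]
  exact ⟨fun h ↦ (cevians_mem_iff equilateral_mem_T).1 (h 1 1 1 equilateral_mem_T),
    fun h a b c hT ↦ (cevians_mem_iff hT).2 h⟩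

end Ceva

open Ceva in
theorem ceva_main_theorem :
    A = {p : ℝ × ℝ × ℝ | ∃ ξ : ℝ, p = (ξ, ξ, ξ)} ∪
      {p : ℝ × ℝ × ℝ | ∃ ξ : ℝ, ξ ≠ -phi⁻¹ ∧ ξ ≠ phi ∧
        (p = (-ξ, 2 - ξ, ξ) ∨ p = (ξ, -ξ, 2 - ξ) ∨ p = (2 - ξ, ξ, -ξ))} ∪
      {p : ℝ × ℝ × ℝ | ∃ ξ : ℝ, ξ ∈ Set.Ioo phi (phi ^ 2) ∧
        (p = (1 / (1 - ξ), 1 - 1 / ξ, ξ) ∨ p = (ξ, 1 / (1 - ξ), 1 - 1 / ξ) ∨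
          p = (1 - 1 / ξ, ξ, 1 / (1 - ξ)))} := by
  ext ⟨ρ, σ, τ⟩
  constructor
  · intro h
    rcases diag_or_isRotation_of_mem_A h with ⟨ξ, hp⟩ | ⟨ξ, hp⟩ | ⟨ξ, hξ, hp⟩
    · exact .inl (.inl ⟨ξ, hp⟩)
    · obtain ⟨h₁, h₂⟩ := neg_two_sub_mem_A_iff.1 (hp.mem_A_iff.1 h)
      exact .inl (.inr ⟨ξ, h₁, h₂, hp⟩)
    · exact .inr ⟨ξ, (one_div_mem_A_iff hξ).1 (hp.mem_A_iff.1 h), hp⟩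
  · rintro ((⟨ξ, hp⟩ | ⟨ξ, h₁, h₂, (hp : IsRotation (ρ, σ, τ) (ξ, -ξ, 2 - ξ))⟩) |
      ⟨ξ, hξ, (hp : IsRotation (ρ, σ, τ) (ξ, 1 / (1 - ξ), 1 - 1 / ξ))⟩)
    · exact hp ▸ diag_mem_A ξ
    · exact hp.mem_A_iff.2 (neg_two_sub_mem_A_iff.2 ⟨h₁, h₂⟩)
    · exact hp.mem_A_iff.2 ((one_div_mem_A_iff (one_lt_phi.trans hξ.1)).2 hξ)
end

section
/- Let φ = (1+√5)/2. For every ξ ∈ ℝ with ξ ≠ −φ⁻¹ and ξ ≠ φ, the three triples (−ξ, 2−ξ, ξ), (ξ, −ξ, 2−ξ) and (2−ξ, ξ, −ξ) all belong to 𝔸; that is, for every (a,b,c) ∈ 𝒯, the triple (f(a,b,c,ξ), f(b,c,a,−ξ), f(c,a,b,2−ξ)) lies in 𝒯, and similarly for the two cyclic variants. -/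
/-!
Realise the sides `a`, `b`, `c` by a triangle `p q r`, so that `f` computes the lengths of its
cevian vectors (Stewart's theorem). For the parameters `(ξ, -ξ, 2 - ξ)` the third cevian vector is
the difference of the first two, so the three lengths are the sides of a triangle as soon as the
first two cevian vectors are linearly independent. In the basis `q - r`, `p - r` their determinant
is `ξ ^ 2 - ξ - 1`, which vanishes exactly at `φ` and `-φ⁻¹`. The other two parameter
triples follow by cyclic symmetry.
-/

theorem rotate_mem_T {a b c : ℝ} (h : (a, b, c) ∈ T) : (b, c, a) ∈ T := by
  obtain ⟨hlt, hgt⟩ := h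
  obtain ⟨hab, hba⟩ := abs_sub_lt_iff.mp hlt
  dsimp only at hab hba hgt
  exact ⟨abs_sub_lt_iff.mpr ⟨by linarith, by linarith⟩, by linarith⟩

theorem pos_of_mem_T {a b c : ℝ} (h : (a, b, c) ∈ T) : 0 < a := by
  have hba := (abs_sub_lt_iff.mp h.1).2
  have hgt := h.2
  dsimp only at hba hgt
  linarith

theorem norm_mem_T_iff {E : Type*} [NormedAddCommGroup E] [NormedSpace ℝ E] [StrictConvexSpace ℝ E]
    {x y : E} : (‖x‖, ‖y‖, ‖x - y‖) ∈ T ↔ LinearIndependent ℝ ![x, y] := by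
  have hneg : ¬SameRay ℝ x (-y) ↔ ‖x - y‖ < ‖x‖ + ‖y‖ := by
    rw [not_sameRay_iff_norm_add_lt, norm_neg, sub_eq_add_neg]
  rw [iff_not_comm.mp sameRay_or_sameRay_neg_iff_not_linearIndependent, not_or, hneg,
    not_sameRay_iff_abs_lt_norm_sub]
  rfl

/-- By the intermediate value theorem: `‖x - y‖` varies continuously from `|a - b|` to `a + b` as
`y` moves on the sphere of radius `b`, which is connected in dimension at least two. -/
theorem exists_norm_eq_norm_eq_norm_sub_eq {E : Type*} [NormedAddCommGroup E] [NormedSpace ℝ E]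
    (hE : 1 < Module.rank ℝ E) {a b c : ℝ} (ha : 0 ≤ a) (hb : 0 ≤ b) (hlt : |a - b| ≤ c)
    (hgt : c ≤ a + b) : ∃ x y : E, ‖x‖ = a ∧ ‖y‖ = b ∧ ‖x - y‖ = c := by
  have : Nontrivial E := rank_pos_iff_nontrivial.mp (zero_lt_one.trans hE)
  obtain ⟨e, he⟩ := exists_norm_eq E zero_le_one
  have hmem : b • e ∈ Metric.sphere (0 : E) b := by simp [norm_smul, he, abs_of_nonneg hb]
  have hmem_neg : -(b • e) ∈ Metric.sphere (0 : E) b := by simpa using hmem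
  have hnear : ‖a • e - b • e‖ = |a - b| := by rw [← sub_smul, norm_smul, he, mul_one]; rfl
  have hfar : ‖a • e - -(b • e)‖ = a + b := by
    rw [sub_neg_eq_add, ← add_smul, norm_smul, he, mul_one, Real.norm_of_nonneg (add_nonneg ha hb)]
  obtain ⟨y, hy, hxy⟩ := (isPreconnected_sphere hE 0 b).intermediate_value hmem hmem_neg
    (f := fun y ↦ ‖a • e - y‖) (by fun_prop) ⟨hnear.trans_le hlt, hgt.trans_eq hfar.symm⟩
  exact ⟨a • e, y, by simp [norm_smul, he, abs_of_nonneg ha], by simpa using hy, hxy⟩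

section Cevian

variable {k V P : Type*} [CommRing k] [AddCommGroup V] [Module k V] [AddTorsor V P]

/-- The cevian vector of the triangle `p q r` from the vertex `p` to the point of the line `q r`
with affine parameter `ρ`, where `ρ = 0` gives `q` and `ρ = 1` gives `r`. -/
noncomputable def cevian (p q r : P) (ρ : k) : V :=
  AffineMap.lineMap q r ρ -ᵥ p

theorem cevian_eq_smul_vsub (o p q r : P) (ρ : k) :
    cevian p q r ρ = (1 - ρ) • (q -ᵥ o) + ρ • (r -ᵥ o) - (p -ᵥ o) := by
  rw [cevian, ← vsub_sub_vsub_cancel_right _ p o, AffineMap.lineMap_apply, vadd_vsub_assoc,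
    ← vsub_sub_vsub_cancel_right r q o]
  module

theorem cevian_sub_cevian (p q r : P) (ξ : k) :
    (cevian p q r ξ - cevian q r p (-ξ) : V) = cevian r p q (2 - ξ) := by
  simp only [cevian_eq_smul_vsub r, vsub_self]
  module

theorem linearIndependent_cevian_iff [IsDomain k] {p q r : P} {ρ σ : k} :
    LinearIndependent k ![(cevian p q r ρ : V), cevian q r p σ] ↔
      LinearIndependent k ![q -ᵥ r, p -ᵥ r] ∧ (1 - ρ) * σ ≠ 1 := by
  have hfst : cevian p q r ρ = (1 - ρ) • (q -ᵥ r) + (-1 : k) • (p -ᵥ r) := by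
    rw [cevian_eq_smul_vsub r, vsub_self]
    module
  have hsnd : cevian q r p σ = (-1 : k) • (q -ᵥ r) + σ • (p -ᵥ r) := by
    rw [cevian_eq_smul_vsub r, vsub_self]
    module
  rw [hfst, hsnd, LinearIndependent.pair_add_smul_add_smul_iff, neg_mul_neg, one_mul]

end Cevian

/-- A form of **Stewart's theorem**. -/
theorem f_dist_eq_norm_cevian {V P : Type*} [SeminormedAddCommGroup V]
    [InnerProductSpace ℝ V] [PseudoMetricSpace P] [NormedAddTorsor V P] (p q r : P) (ρ : ℝ) :
    f (dist q r) (dist r p) (dist p q) ρ = ‖(cevian p q r ρ : V)‖ := by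
  have hqr : dist q r ^ 2 = dist p q ^ 2 - 2 * inner ℝ (q -ᵥ p) (r -ᵥ p) + dist r p ^ 2 := by
    rw [dist_eq_norm_vsub V q r, ← vsub_sub_vsub_cancel_right q r p, norm_sub_sq_real,
      dist_comm p q, dist_eq_norm_vsub V q p, dist_eq_norm_vsub V r p]
  have hcevian : ‖(cevian p q r ρ : V)‖ ^ 2 = (1 - ρ) ^ 2 * dist p q ^ 2
      + 2 * ((1 - ρ) * ρ * inner ℝ (q -ᵥ p) (r -ᵥ p)) + ρ ^ 2 * dist r p ^ 2 := by
    rw [cevian_eq_smul_vsub p, vsub_self, sub_zero, norm_add_sq_real, norm_smul, norm_smul,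
      real_inner_smul_left, real_inner_smul_right, dist_comm p q, dist_eq_norm_vsub V q p,
      dist_eq_norm_vsub V r p, mul_pow, mul_pow, Real.norm_eq_abs, Real.norm_eq_abs, sq_abs, sq_abs,
      mul_assoc (1 - ρ)]
  rw [f, ← Real.sqrt_sq (norm_nonneg (cevian p q r ρ : V)), hcevian, hqr]
  ring_nf

theorem rotate_mem_A {ρ σ τ : ℝ} (h : (ρ, σ, τ) ∈ A) : (σ, τ, ρ) ∈ A :=
  fun a b c habc ↦ rotate_mem_T (h c a b (rotate_mem_T (rotate_mem_T habc)))

theorem mem_A_of_forall_cevian {V : Type*} [NormedAddCommGroup V] [InnerProductSpace ℝ V]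
    (hV : 1 < Module.rank ℝ V) {ρ σ τ : ℝ}
    (h : ∀ p q r : V, LinearIndependent ℝ ![q - r, p - r] →
      (‖cevian p q r ρ‖, ‖cevian q r p σ‖, ‖cevian r p q τ‖) ∈ T) :
    (ρ, σ, τ) ∈ A := by
  intro a b c habc
  obtain ⟨q, p, rfl, rfl, rfl⟩ := exists_norm_eq_norm_eq_norm_sub_eq hV (pos_of_mem_T habc).le
    (pos_of_mem_T (rotate_mem_T habc)).le habc.1.le habc.2.le
  have hcevian := h p q 0 (by simpa using norm_mem_T_iff.mp habc)
  simpa only [← f_dist_eq_norm_cevian, dist_zero_left, dist_zero_right, dist_comm p q,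
    dist_eq_norm q p] using hcevian

theorem mem_A_of_sq_sub_self_ne_one {ξ : ℝ} (hξ : ξ ^ 2 - ξ ≠ 1) : (ξ, -ξ, 2 - ξ) ∈ A := by
  have hdet : (1 - ξ) * -ξ ≠ 1 := by
    convert hξ using 1
    ring
  refine mem_A_of_forall_cevian (V := ℂ) (by simp) fun p q r hpqr ↦ ?_
  rw [← cevian_sub_cevian, norm_mem_T_iff]
  exact linearIndependent_cevian_iff.mpr ⟨hpqr, hdet⟩

theorem sq_sub_self_eq_one_iff {x : ℝ} : x ^ 2 - x = 1 ↔ x = -phi⁻¹ ∨ x = phi := by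
  have hphi : phi = Real.goldenRatio := rfl
  have hfactor : x ^ 2 - x - 1 = (x - Real.goldenConj) * (x - Real.goldenRatio) := by
    linear_combination x * Real.goldenRatio_add_goldenConj - Real.goldenRatio_mul_goldenConj
  rw [hphi, Real.inv_goldenRatio, neg_neg, ← sub_eq_zero, hfactor, mul_eq_zero, sub_eq_zero,
    sub_eq_zero]

theorem second_family_in_A (ξ : ℝ) (h1 : ξ ≠ -phi⁻¹) (h2 : ξ ≠ phi) :
    (-ξ, 2 - ξ, ξ) ∈ A ∧ (ξ, -ξ, 2 - ξ) ∈ A ∧ (2 - ξ, ξ, -ξ) ∈ A := by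
  have hξ : ξ ^ 2 - ξ ≠ 1 := fun h ↦ (sq_sub_self_eq_one_iff.mp h).elim h1 h2
  have hmem : (ξ, -ξ, 2 - ξ) ∈ A := mem_A_of_sq_sub_self_ne_one hξ
  exact ⟨rotate_mem_A hmem, hmem, rotate_mem_A (rotate_mem_A hmem)⟩
end

section
/- Let φ = (1+√5)/2. For every ξ in the open interval (φ, φ²), the three triples (1/(1−ξ), 1 − 1/ξ, ξ), (ξ, 1/(1−ξ), 1 − 1/ξ) and (1 − 1/ξ, ξ, 1/(1−ξ)) all belong to 𝔸. -/
/-!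
For `ξ ≠ 0, 1` the cevians `AA_ρ`, `BB_σ`, `CC_τ` of a triangle `ABC` with parameters
`ρ = 1 / (1 - ξ)`, `σ = 1 - 1 / ξ`, `τ = ξ` are parallel: as vectors, `AA_ρ = CC_τ / (ξ - 1)` and
`BB_σ = -CC_τ / ξ`. Their lengths are therefore in the ratio `|ξ| : |ξ - 1| : |ξ (ξ - 1)|`, whatever
the triangle, and so the triple lies in `A` exactly when these three numbers are themselves the
sides of a triangle. For `ξ > 1` this says `1 < ξ (ξ - 1) < 2 ξ - 1`, that is, `φ < ξ < φ ^ 2`.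
-/

theorem mem_T_iff {a b c : ℝ} : (a, b, c) ∈ T ↔ |a - b| < c ∧ c < a + b :=
  Iff.rfl

theorem mul_mem_T_iff {a b c k : ℝ} (hk : 0 < k) :
    (k * a, k * b, k * c) ∈ T ↔ (a, b, c) ∈ T := by
  rw [mem_T_iff, mem_T_iff, ← mul_sub, ← mul_add, abs_mul, abs_of_pos hk,
    mul_lt_mul_iff_right₀ hk, mul_lt_mul_iff_right₀ hk]

theorem heron_pos_of_mem_T {a b c : ℝ} (h : (a, b, c) ∈ T) :
    0 < (a + b + c) * (b + c - a) * (c + a - b) * (a + b - c) := by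
  rw [mem_T_iff, abs_lt] at h
  obtain ⟨⟨hb, ha⟩, hc⟩ := h
  exact mul_pos (mul_pos (mul_pos (by linarith) (by linarith)) (by linarith)) (by linarith)

/-- The squared length of the cevian `AA_ρ`, where `A_ρ = B + ρ (C - B)`, in the triangle `ABC` with
`BC = a`, `CA = b` and `AB = c` (Stewart's theorem). It is the radicand in `f`. -/
def cevianSq (a b c ρ : ℝ) : ℝ :=
  ρ * (ρ - 1) * a ^ 2 + ρ * b ^ 2 + (1 - ρ) * c ^ 2

theorem f_eq_sqrt_cevianSq (a b c ρ : ℝ) : f a b c ρ = √(cevianSq a b c ρ) :=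
  rfl

/- As a quadratic polynomial in `ρ`, the squared length has discriminant `-16 S ^ 2`, where `S` is
the area of the triangle. -/
theorem cevianSq_pos {a b c : ℝ} (h : (a, b, c) ∈ T) (ρ : ℝ) : 0 < cevianSq a b c ρ := by
  have complete_square : 4 * a ^ 2 * cevianSq a b c ρ =
      (2 * a ^ 2 * ρ + b ^ 2 - a ^ 2 - c ^ 2) ^ 2 +
        (a + b + c) * (b + c - a) * (c + a - b) * (a + b - c) := by
    unfold cevianSq
    ring
  have hmul : 0 < 4 * a ^ 2 * cevianSq a b c ρ := by
    linarith [heron_pos_of_mem_T h, sq_nonneg (2 * a ^ 2 * ρ + b ^ 2 - a ^ 2 - c ^ 2)]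
  exact pos_of_mul_pos_right hmul (by positivity)

theorem cevianSq_one_div_one_sub (a b c : ℝ) {ξ : ℝ} (h1 : ξ ≠ 1) :
    cevianSq a b c (1 / (1 - ξ)) = cevianSq c a b ξ / (ξ - 1) ^ 2 := by
  have hξ : 1 - ξ ≠ 0 := sub_ne_zero.2 h1.symm
  rw [← neg_sub 1 ξ, neg_sq]
  unfold cevianSq
  field_simp
  ring

theorem cevianSq_one_sub_one_div (a b c : ℝ) {ξ : ℝ} (h0 : ξ ≠ 0) :
    cevianSq b c a (1 - 1 / ξ) = cevianSq c a b ξ / ξ ^ 2 := by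
  unfold cevianSq
  field_simp
  ring

theorem f_one_div_one_sub (a b c : ℝ) {ξ : ℝ} (h1 : ξ ≠ 1) :
    f a b c (1 / (1 - ξ)) = f c a b ξ / |ξ - 1| := by
  rw [f_eq_sqrt_cevianSq, f_eq_sqrt_cevianSq, cevianSq_one_div_one_sub a b c h1,
    Real.sqrt_div' _ (sq_nonneg _), Real.sqrt_sq_eq_abs]

theorem f_one_sub_one_div (a b c : ℝ) {ξ : ℝ} (h0 : ξ ≠ 0) :
    f b c a (1 - 1 / ξ) = f c a b ξ / |ξ| := by
  rw [f_eq_sqrt_cevianSq, f_eq_sqrt_cevianSq, cevianSq_one_sub_one_div a b c h0,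
    Real.sqrt_div' _ (sq_nonneg _), Real.sqrt_sq_eq_abs]

theorem cevians_mem_T_iff {a b c ξ : ℝ} (habc : (a, b, c) ∈ T) (h0 : ξ ≠ 0) (h1 : ξ ≠ 1) :
    (f a b c (1 / (1 - ξ)), f b c a (1 - 1 / ξ), f c a b ξ) ∈ T ↔
      (|ξ|, |ξ - 1|, |ξ * (ξ - 1)|) ∈ T := by
  have hf : 0 < f c a b ξ := Real.sqrt_pos.2 (cevianSq_pos (rotate_mem_T (rotate_mem_T habc)) ξ)
  have hξ : 0 < |ξ| := abs_pos.2 h0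
  have hξ1 : 0 < |ξ - 1| := abs_pos.2 (sub_ne_zero.2 h1)
  set k := f c a b ξ / (|ξ| * |ξ - 1|) with hk
  have hρ : f a b c (1 / (1 - ξ)) = k * |ξ| := by
    rw [f_one_div_one_sub a b c h1, hk]
    field_simp
  have hσ : f b c a (1 - 1 / ξ) = k * |ξ - 1| := by
    rw [f_one_sub_one_div a b c h0, hk]
    field_simp
  have hτ : f c a b ξ = k * |ξ * (ξ - 1)| := by
    rw [abs_mul, hk]
    field_simp
  rw [hρ, hσ, hτ, mul_mem_T_iff (div_pos hf (mul_pos hξ hξ1))]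

theorem one_div_one_sub_mem_A_iff {ξ : ℝ} (h0 : ξ ≠ 0) (h1 : ξ ≠ 1) :
    (1 / (1 - ξ), 1 - 1 / ξ, ξ) ∈ A ↔ (|ξ|, |ξ - 1|, |ξ * (ξ - 1)|) ∈ T := by
  constructor
  · intro h
    have equilateral : ((1, 1, 1) : ℝ × ℝ × ℝ) ∈ T := by norm_num [mem_T_iff]
    exact (cevians_mem_T_iff equilateral h0 h1).1 (h 1 1 1 equilateral)
  · exact fun h a b c habc ↦ (cevians_mem_T_iff habc h0 h1).2 h

theorem one_lt_phi : 1 < phi :=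
  Real.one_lt_goldenRatio

theorem phi_sq : phi ^ 2 = phi + 1 :=
  Real.goldenRatio_sq

theorem abs_mem_T_of_mem_Ioo_phi {ξ : ℝ} (hξ : ξ ∈ Set.Ioo phi (phi ^ 2)) :
    (|ξ|, |ξ - 1|, |ξ * (ξ - 1)|) ∈ T := by
  obtain ⟨hl, hu⟩ := hξ
  rw [phi_sq] at hu
  have h1 : 1 < ξ := one_lt_phi.trans hl
  have hlower : 1 < ξ * (ξ - 1) := by
    nlinarith [phi_sq, one_lt_phi]
  -- The two sides differ by `ξ ^ 2 - 3 * ξ + 1`, whose roots are `φ + 1` and `2 - φ`.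
  have hupper : ξ * (ξ - 1) < 2 * ξ - 1 := by
    nlinarith [phi_sq, mul_pos (sub_pos.2 hu) (show 0 < ξ - (2 - phi) by linarith [one_lt_phi])]
  rw [abs_of_pos (by linarith : 0 < ξ), abs_of_pos (by linarith : 0 < ξ - 1),
    abs_of_pos (by linarith : 0 < ξ * (ξ - 1)), mem_T_iff, sub_sub_cancel, abs_one]
  exact ⟨hlower, by linarith⟩

theorem third_family_in_A_general {ξ : ℝ} (h0 : ξ ≠ 0) (h1 : ξ ≠ 1) :
    ((1 / (1 - ξ), 1 - 1 / ξ, ξ) ∈ A ∧ (ξ, 1 / (1 - ξ), 1 - 1 / ξ) ∈ A ∧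
      (1 - 1 / ξ, ξ, 1 / (1 - ξ)) ∈ A) ↔ (|ξ|, |ξ - 1|, |ξ * (ξ - 1)|) ∈ T := by
  rw [← one_div_one_sub_mem_A_iff h0 h1]
  exact ⟨And.left, fun h ↦ ⟨h, rotate_mem_A (rotate_mem_A h), rotate_mem_A h⟩⟩

theorem third_family_in_A (ξ : ℝ) (hξ : ξ ∈ Set.Ioo phi (phi ^ 2)) :
    (1 / (1 - ξ), 1 - 1 / ξ, ξ) ∈ A ∧ (ξ, 1 / (1 - ξ), 1 - 1 / ξ) ∈ A ∧
      (1 - 1 / ξ, ξ, 1 / (1 - ξ)) ∈ A := by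
  have h1 : 1 < ξ := one_lt_phi.trans hξ.1
  exact (third_family_in_A_general (by positivity) h1.ne').2 (abs_mem_T_of_mem_Ioo_phi hξ)
end

section
/- If (ρ,σ,τ) ∈ 𝔸, then (ρ,σ,τ) ∈ 𝔹; that is, for all t > 0 the three limiting inequalities hold: ||ρ(t+1) − 1| − |σt − t − 1|| ≤ |τ + t| ≤ |ρ(t+1) − 1| + |σt − t − 1|; ||ρ + t| − |σ(t+1) − 1|| ≤ |τt − t − 1| ≤ |ρ + t| + |σ(t+1) − 1|; and ||ρt − t − 1| − |σ + t|| ≤ |τ(t+1) − 1| ≤ |ρt − t − 1| + |σ + t|. -/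
/-- The solution set of the three one-parameter families of limiting
inequalities. -/
def B : Set (ℝ × ℝ × ℝ) :=
  {p | ∀ t : ℝ, 0 < t →
    (abs (|p.1 * (t + 1) - 1| - |p.2.1 * t - t - 1|) ≤ |p.2.2 + t| ∧
      |p.2.2 + t| ≤ |p.1 * (t + 1) - 1| + |p.2.1 * t - t - 1|) ∧
    (abs (|p.1 + t| - |p.2.1 * (t + 1) - 1|) ≤ |p.2.2 * t - t - 1| ∧
      |p.2.2 * t - t - 1| ≤ |p.1 + t| + |p.2.1 * (t + 1) - 1|) ∧
    (abs (|p.1 * t - t - 1| - |p.2.1 + t|) ≤ |p.2.2 * (t + 1) - 1| ∧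
      |p.2.2 * (t + 1) - 1| ≤ |p.1 * t - t - 1| + |p.2.1 + t|)}

open Filter Topology

theorem closure_T : closure T = {q | |q.1 - q.2.1| ≤ q.2.2 ∧ q.2.2 ≤ q.1 + q.2.1} := by
  apply Set.Subset.antisymm
  · have hdiff : IsClosed {q : ℝ × ℝ × ℝ | |q.1 - q.2.1| ≤ q.2.2} :=
      isClosed_le (by fun_prop) (by fun_prop)
    have hsum : IsClosed {q : ℝ × ℝ × ℝ | q.2.2 ≤ q.1 + q.2.1} :=
      isClosed_le (by fun_prop) (by fun_prop)
    exact closure_minimal (fun q hq => ⟨hq.1.le, hq.2.le⟩) (hdiff.inter hsum)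
  · rintro ⟨a, b, c⟩ ⟨hdiff, hsum⟩
    have shift_mem_T : ∀ ε : ℝ, 0 < ε → (a + ε, b + ε, c + ε) ∈ T := fun ε hε => by
      simp only [T, Set.mem_ofPred_eq, add_sub_add_right_eq_sub] at hdiff hsum ⊢
      constructor <;> linarith
    have shift_tendsto :
        Tendsto (fun ε : ℝ => (a + ε, b + ε, c + ε)) (𝓝[>] 0) (𝓝 (a, b, c)) := by
      have hcont : Continuous fun ε : ℝ => (a + ε, b + ε, c + ε) := by fun_prop
      simpa only [add_zero] using (hcont.tendsto 0).mono_left nhdsWithin_le_nhds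
    exact mem_closure_of_tendsto shift_tendsto (eventually_mem_nhdsWithin.mono shift_mem_T)

theorem degenerate_mem_closure_T {x y : ℝ} (hx : 0 ≤ x) (hy : 0 ≤ y) :
    (x + y, x, y) ∈ closure T ∧ (y, x + y, x) ∈ closure T ∧ (x, y, x + y) ∈ closure T := by
  simp only [closure_T, Set.mem_ofPred_eq, abs_le]
  refine ⟨⟨⟨?_, ?_⟩, ?_⟩, ⟨⟨?_, ?_⟩, ?_⟩, ⟨⟨?_, ?_⟩, ?_⟩⟩ <;> linarith

/-- The lengths of the three cevians with parameters `p = (ρ, σ, τ)`, as a function of the triple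
`q = (a, b, c)` of side lengths. -/
noncomputable def cevians (p q : ℝ × ℝ × ℝ) : ℝ × ℝ × ℝ :=
  (f q.1 q.2.1 q.2.2 p.1, f q.2.1 q.2.2 q.1 p.2.1, f q.2.2 q.1 q.2.1 p.2.2)

theorem continuous_cevians (p : ℝ × ℝ × ℝ) : Continuous (cevians p) := by
  unfold cevians f
  fun_prop

theorem mapsTo_cevians_closure_T {p : ℝ × ℝ × ℝ} (hp : p ∈ A) :
    Set.MapsTo (cevians p) (closure T) (closure T) :=
  Set.MapsTo.closure (fun q hq => hp q.1 q.2.1 q.2.2 hq) (continuous_cevians p)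

theorem f_add_left (b c ρ : ℝ) : f (b + c) b c ρ = |ρ * (b + c) - c| := by
  rw [f, ← Real.sqrt_sq_eq_abs]
  ring_nf

theorem f_add_middle (a c ρ : ℝ) : f a (c + a) c ρ = |ρ * a + c| := by
  rw [f, ← Real.sqrt_sq_eq_abs]
  ring_nf

theorem f_add_right (a b ρ : ℝ) : f a b (a + b) ρ = |ρ * a - a - b| := by
  rw [f, ← Real.sqrt_sq_eq_abs]
  ring_nf

theorem mem_B_iff {p : ℝ × ℝ × ℝ} :
    p ∈ B ↔ ∀ t : ℝ, 0 < t → cevians p (t + 1, t, 1) ∈ closure T ∧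
      cevians p (1, t + 1, t) ∈ closure T ∧ cevians p (t, 1, t + 1) ∈ closure T := by
  simp only [B, closure_T, cevians, f_add_left, f_add_middle, f_add_right, mul_one,
    Set.mem_ofPred_eq]

theorem A_subset_B : A ⊆ B := by
  intro p hp
  refine mem_B_iff.2 fun t ht => ?_
  obtain ⟨hfirst, hsecond, hthird⟩ := degenerate_mem_closure_T ht.le zero_le_one
  have hmaps := mapsTo_cevians_closure_T hp
  exact ⟨hmaps hfirst, hmaps hsecond, hmaps hthird⟩
end

section
/- If (ρ,σ,τ) ∈ 𝔹, then |ρ(1 − τ) − 1| = |−στ + τ − 1|. -/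
/-- The numbers `x`, `y`, `z` satisfy the three triangle inequalities, that is, they are the side
lengths of a possibly degenerate triangle. Two of the inequalities are packed into `|x - y| ≤ z`, so
that membership in `B` unfolds to statements of this form. -/
def TriangleIneqs (x y z : ℝ) : Prop :=
  |x - y| ≤ z ∧ z ≤ x + y

namespace TriangleIneqs

variable {x y z : ℝ}

lemma rotate (h : TriangleIneqs x y z) : TriangleIneqs y z x := by
  obtain ⟨hxy, hz⟩ := h
  obtain ⟨hx, hy⟩ := abs_sub_le_iff.mp hxy
  exact ⟨abs_sub_le_iff.mpr ⟨by linarith, by linarith⟩, by linarith⟩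

lemma mul_left (h : TriangleIneqs x y z) {s : ℝ} (hs : 0 ≤ s) :
    TriangleIneqs (s * x) (s * y) (s * z) := by
  refine ⟨?_, ?_⟩
  · rw [← mul_sub, abs_mul, abs_of_nonneg hs]
    exact mul_le_mul_of_nonneg_left h.1 hs
  · rw [← mul_add]
    exact mul_le_mul_of_nonneg_left h.2 hs

lemma eq_of_right_eq_zero (h : TriangleIneqs x y 0) : x = y :=
  sub_eq_zero.mp (abs_nonpos_iff.mp h.1)

lemma isClosed_setOf {X : Type*} [TopologicalSpace X] {f g k : X → ℝ} (hf : Continuous f)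
    (hg : Continuous g) (hk : Continuous k) : IsClosed {p | TriangleIneqs (f p) (g p) (k p)} :=
  (isClosed_le (hf.sub hg).abs hk).inter (isClosed_le hk (hf.add hg))

end TriangleIneqs

namespace B

variable {ρ σ τ a b c : ℝ}

lemma rotate_mem (h : (ρ, σ, τ) ∈ B) : (σ, τ, ρ) ∈ B := fun t ht =>
  have ⟨h₁, h₂, h₃⟩ := h t ht
  ⟨TriangleIneqs.rotate h₂, TriangleIneqs.rotate h₃, TriangleIneqs.rotate h₁⟩

lemma triangleIneqs_of_pos (h : (ρ, σ, τ) ∈ B) (habc : a + b + c = 0) (hb : 0 < b) (hc : 0 < c) :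
    TriangleIneqs |ρ * a + c| |σ * b + a| |τ * c + b| := by
  obtain rfl : a = -(b + c) := by linarith
  have h_first : TriangleIneqs |ρ * (b / c + 1) - 1| |σ * (b / c) - b / c - 1| |τ + b / c| :=
    (h (b / c) (div_pos hb hc)).1
  have hρ : ρ * -(b + c) + c = -(c * (ρ * (b / c + 1) - 1)) := by field_simp; ring
  have hσ : σ * b + -(b + c) = c * (σ * (b / c) - b / c - 1) := by field_simp; ring
  have hτ : τ * c + b = c * (τ + b / c) := by field_simp
  rw [hρ, hσ, hτ, abs_neg, abs_mul, abs_mul, abs_mul]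
  exact h_first.mul_left (abs_nonneg c)

lemma triangleIneqs_of_nonneg (h : (ρ, σ, τ) ∈ B) (habc : a + b + c = 0) (hb : 0 ≤ b)
    (hc : 0 ≤ c) : TriangleIneqs |ρ * a + c| |σ * b + a| |τ * c + b| := by
  obtain rfl : a = -(b + c) := by linarith
  have h_closed : IsClosed {p : ℝ × ℝ |
      TriangleIneqs |ρ * -(p.1 + p.2) + p.2| |σ * p.1 + -(p.1 + p.2)| |τ * p.2 + p.1|} :=
    TriangleIneqs.isClosed_setOf (by fun_prop) (by fun_prop) (by fun_prop)
  have h_closure : (b, c) ∈ closure (Set.Ioi (0 : ℝ) ×ˢ Set.Ioi (0 : ℝ)) := by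
    rw [closure_prod_eq, closure_Ioi]
    exact ⟨hb, hc⟩
  exact closure_minimal (fun _ hp => triangleIneqs_of_pos h (by ring) hp.1 hp.2) h_closed h_closure

lemma triangleIneqs_of_mul_nonneg (h : (ρ, σ, τ) ∈ B) (habc : a + b + c = 0) (hbc : 0 ≤ b * c) :
    TriangleIneqs |ρ * a + c| |σ * b + a| |τ * c + b| := by
  rcases mul_nonneg_iff.mp hbc with ⟨hb, hc⟩ | ⟨hb, hc⟩
  · exact triangleIneqs_of_nonneg h habc hb hc
  · have h_neg : TriangleIneqs |ρ * -a + -c| |σ * -b + -a| |τ * -c + -b| :=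
      triangleIneqs_of_nonneg h (by linarith) (neg_nonneg.mpr hb) (neg_nonneg.mpr hc)
    simpa only [mul_neg, ← neg_add, abs_neg] using h_neg

theorem triangleIneqs_of_add_eq_zero (h : (ρ, σ, τ) ∈ B) (habc : a + b + c = 0) :
    TriangleIneqs |ρ * a + c| |σ * b + a| |τ * c + b| := by
  have h_sign : 0 ≤ b * c ∨ 0 ≤ c * a ∨ 0 ≤ a * b := by
    by_contra! h_neg
    obtain ⟨hbc, hca, hab⟩ := h_neg
    have h_pos : 0 < c ^ 2 * (a * b) := by linarith [mul_pos_of_neg_of_neg hbc hca]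
    exact hab.not_gt (pos_of_mul_pos_right h_pos (sq_nonneg c))
  rcases h_sign with hbc | hca | hab
  · exact triangleIneqs_of_mul_nonneg h habc hbc
  · exact (triangleIneqs_of_mul_nonneg (rotate_mem h) (by linarith) hca).rotate.rotate
  · exact (triangleIneqs_of_mul_nonneg (rotate_mem (rotate_mem h)) (by linarith) hab).rotate

end B

theorem members_of_B_satisfy_key_equation (ρ σ τ : ℝ)
    (h : (ρ, σ, τ) ∈ B) :
    |ρ * (1 - τ) - 1| = |-σ * τ + τ - 1| := by
  have h_tri : TriangleIneqs |ρ * (τ - 1) + 1| |σ * -τ + (τ - 1)| |τ * 1 + -τ| :=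
    B.triangleIneqs_of_add_eq_zero h (by ring)
  rw [mul_one, add_neg_cancel, abs_zero] at h_tri
  calc |ρ * (1 - τ) - 1| = |ρ * (τ - 1) + 1| := by rw [← abs_neg]; ring_nf
    _ = |σ * -τ + (τ - 1)| := h_tri.eq_of_right_eq_zero
    _ = |-σ * τ + τ - 1| := by ring_nf
end

section
/- The section of 𝔹 at τ = 0 is exactly the four points (0,0,0), (0,2,0), (2,0,0), (2,−2,0); and the section of 𝔹 at τ = 1 is exactly the four points (1,1,1), (−1,1,1), (1,−1,1), (3,−1,1). -/
/-- The absolute values of `x`, `y`, `z` are the side lengths of a possibly degenerate triangle. -/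
def AbsTriangle {α : Type*} [AddCommGroup α] [LinearOrder α] (x y z : α) : Prop :=
  |x| ≤ |y| + |z| ∧ |y| ≤ |z| + |x| ∧ |z| ≤ |x| + |y|

namespace AbsTriangle

section OrderedGroup

variable {α : Type*} [AddCommGroup α] [LinearOrder α] {x y z : α}

lemma rotate (h : AbsTriangle x y z) : AbsTriangle y z x :=
  ⟨h.2.1, h.2.2, h.1⟩

lemma rotate_iff : AbsTriangle y z x ↔ AbsTriangle x y z :=
  ⟨fun h ↦ h.rotate.rotate, rotate⟩

lemma swap_right (h : AbsTriangle x y z) : AbsTriangle x z y :=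
  ⟨by simpa only [add_comm] using h.1, by simpa only [add_comm] using h.2.2,
    by simpa only [add_comm] using h.2.1⟩

variable [IsOrderedAddMonoid α]

lemma iff_abs_abs_sub_abs_le :
    AbsTriangle x y z ↔ |(|x| - |y|)| ≤ |z| ∧ |z| ≤ |x| + |y| := by
  rw [AbsTriangle, abs_sub_le_iff, sub_le_iff_le_add', sub_le_iff_le_add, and_assoc]

lemma abs_eq_abs (h : AbsTriangle x y z) (hz : z = 0) : |x| = |y| := by
  subst hz
  exact le_antisymm (by simpa using h.1) (by simpa using h.2.1)

lemma isClosed_setOf [TopologicalSpace α] [OrderTopology α] :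
    IsClosed {p : α × α × α | AbsTriangle p.1 p.2.1 p.2.2} :=
  (isClosed_le (by fun_prop) (by fun_prop)).inter <|
    (isClosed_le (by fun_prop) (by fun_prop)).inter (isClosed_le (by fun_prop) (by fun_prop))

end OrderedGroup

section OrderedRing

variable {R : Type*} [Ring R] [LinearOrder R] [IsOrderedRing R] {x y z : R}

lemma mul_left (h : AbsTriangle x y z) (c : R) : AbsTriangle (c * x) (c * y) (c * z) := by
  simp only [AbsTriangle, abs_mul, ← mul_add]
  exact ⟨mul_le_mul_of_nonneg_left h.1 (abs_nonneg c),
    mul_le_mul_of_nonneg_left h.2.1 (abs_nonneg c), mul_le_mul_of_nonneg_left h.2.2 (abs_nonneg c)⟩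

lemma of_eq_signed_add {ε δ : R} (hε : |ε| = 1) (hδ : |δ| = 1) (h : x = ε * y + δ * z) :
    AbsTriangle x y z := by
  have hy : |ε * y| = |y| := by rw [abs_mul, hε, one_mul]
  have hz : |δ * z| = |z| := by rw [abs_mul, hδ, one_mul]
  rw [AbsTriangle, ← hy, ← hz, h]
  refine ⟨abs_add_le _ _, ?_, ?_⟩
  · simpa [add_comm] using abs_sub (ε * y + δ * z) (δ * z)
  · simpa [add_comm] using abs_sub (ε * y + δ * z) (ε * y)

end OrderedRing

end AbsTriangle

/-- The first family of triangle inequalities defining `B`, at the parameter `t`. The other two are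
obtained from it by rotating `(ρ, σ, τ)`. -/
def LimitTriangle (ρ σ τ t : ℝ) : Prop :=
  AbsTriangle (ρ * (t + 1) - 1) (σ * t - t - 1) (τ + t)

namespace LimitTriangle

variable {ρ σ τ t : ℝ}

lemma isClosed_setOf (ρ σ τ : ℝ) : IsClosed {t | LimitTriangle ρ σ τ t} :=
  AbsTriangle.isClosed_setOf.preimage
    (f := fun t : ℝ ↦ (ρ * (t + 1) - 1, σ * t - t - 1, τ + t)) (by fun_prop)

lemma reflect (ht : t ≠ 0) (h : LimitTriangle ρ σ τ t⁻¹) :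
    LimitTriangle (1 - ρ) (1 - τ) (1 - σ) t := by
  have hρ : (1 - ρ) * (t + 1) - 1 = -t * (ρ * (t⁻¹ + 1) - 1) := by field_simp; ring
  have hτ : (1 - τ) * t - t - 1 = -t * (τ + t⁻¹) := by field_simp; ring
  have hσ : 1 - σ + t = -t * (σ * t⁻¹ - t⁻¹ - 1) := by field_simp; ring
  rw [LimitTriangle, hρ, hτ, hσ]
  exact (h.mul_left (-t)).swap_right

-- The last two hypotheses compare coefficients in `ρ(t+1) - 1 = ε(σt - t - 1) + δ(τ + t)`.
lemma of_signs (ε δ : ℝ) (hε : |ε| = 1 := by norm_num) (hδ : |δ| = 1 := by norm_num)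
    (hconst : ρ - 1 = δ * τ - ε := by norm_num) (hlin : ρ = ε * (σ - 1) + δ := by norm_num) :
    LimitTriangle ρ σ τ t :=
  AbsTriangle.of_eq_signed_add hε hδ (by linear_combination hconst + t * hlin)

end LimitTriangle

section SolutionSet

variable {ρ σ τ t : ℝ}

lemma mem_B_iff_s8 :
    (ρ, σ, τ) ∈ B ↔ ∀ t, 0 < t →
      LimitTriangle ρ σ τ t ∧ LimitTriangle σ τ ρ t ∧ LimitTriangle τ ρ σ t := by
  refine forall₂_congr fun t _ ↦ and_congr ?_ (and_congr ?_ ?_)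
  · exact AbsTriangle.iff_abs_abs_sub_abs_le.symm
  · exact (AbsTriangle.rotate_iff.trans AbsTriangle.iff_abs_abs_sub_abs_le).symm
  · exact (AbsTriangle.rotate_iff.symm.trans AbsTriangle.iff_abs_abs_sub_abs_le).symm

lemma rotate_mem_B (h : (ρ, σ, τ) ∈ B) : (σ, τ, ρ) ∈ B :=
  mem_B_iff_s8.2 fun t ht ↦
    let ⟨hρ, hσ, hτ⟩ := mem_B_iff_s8.1 h t ht
    ⟨hσ, hτ, hρ⟩

lemma reflect_mem_B (h : (ρ, σ, τ) ∈ B) : (1 - σ, 1 - ρ, 1 - τ) ∈ B :=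
  mem_B_iff_s8.2 fun t ht ↦
    let ⟨hρ, hσ, hτ⟩ := mem_B_iff_s8.1 h t⁻¹ (inv_pos.2 ht)
    ⟨hσ.reflect ht.ne', hρ.reflect ht.ne', hτ.reflect ht.ne'⟩

lemma reflect_mem_B_iff : (1 - σ, 1 - ρ, 1 - τ) ∈ B ↔ (ρ, σ, τ) ∈ B :=
  ⟨fun h ↦ by simpa only [sub_sub_cancel] using reflect_mem_B h, reflect_mem_B⟩

lemma limitTriangle_of_mem_B (h : (ρ, σ, τ) ∈ B) (ht : 0 ≤ t) : LimitTriangle ρ σ τ t := by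
  have hpos : Set.Ioi 0 ⊆ {t | LimitTriangle ρ σ τ t} := fun s hs ↦ (mem_B_iff_s8.1 h s hs).1
  have hclosure := closure_minimal hpos (LimitTriangle.isClosed_setOf ρ σ τ)
  rw [closure_Ioi] at hclosure
  exact hclosure ht

lemma abs_sub_one_eq_one_of_mem_B (h : (ρ, σ, 0) ∈ B) : |ρ - 1| = 1 := by
  have h0 : LimitTriangle ρ σ 0 0 := limitTriangle_of_mem_B h le_rfl
  simpa using h0.abs_eq_abs (add_zero 0)

lemma abs_add_one_eq_one_of_two_mem_B (h : (2, σ, 0) ∈ B) : |σ + 1| = 1 := by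
  have h1 : LimitTriangle 0 2 σ 1 :=
    limitTriangle_of_mem_B (rotate_mem_B (rotate_mem_B h)) zero_le_one
  simpa using (h1.swap_right.abs_eq_abs (by norm_num)).symm

lemma zero_zero_zero_mem_B : ((0, 0, 0) : ℝ × ℝ × ℝ) ∈ B := by
  have h (t : ℝ) : LimitTriangle 0 0 0 t := .of_signs 1 1
  exact mem_B_iff_s8.2 fun t _ ↦ ⟨h t, h t, h t⟩

lemma zero_two_zero_mem_B : ((0, 2, 0) : ℝ × ℝ × ℝ) ∈ B :=
  mem_B_iff_s8.2 fun _ _ ↦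
    ⟨.of_signs 1 (-1), .of_signs (-1) 1, .of_signs (-1) (-1)⟩

lemma two_neg_two_zero_mem_B : ((2, -2, 0) : ℝ × ℝ × ℝ) ∈ B :=
  mem_B_iff_s8.2 fun _ _ ↦
    ⟨.of_signs (-1) (-1), .of_signs 1 (-1), .of_signs (-1) 1⟩

lemma mem_B_zero_iff :
    (ρ, σ, 0) ∈ B ↔ (ρ, σ) ∈ ({(0, 0), (0, 2), (2, 0), (2, -2)} : Set (ℝ × ℝ)) := by
  constructor
  · intro h
    obtain rfl | rfl : ρ = 0 ∨ ρ = 2 := by grind [abs_sub_one_eq_one_of_mem_B h]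
    · have hσ : |σ - 1| = 1 := abs_sub_one_eq_one_of_mem_B (rotate_mem_B h)
      obtain rfl | rfl : σ = 0 ∨ σ = 2 := by grind
      all_goals simp
    · have hσ : |σ + 1| = 1 := abs_add_one_eq_one_of_two_mem_B h
      obtain rfl | rfl : σ = 0 ∨ σ = -2 := by grind
      all_goals simp
  · have hrotate : ((2, 0, 0) : ℝ × ℝ × ℝ) ∈ B := rotate_mem_B zero_two_zero_mem_B
    rintro (⟨rfl, rfl⟩ | ⟨rfl, rfl⟩ | ⟨rfl, rfl⟩ | ⟨rfl, rfl⟩)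
    exacts [zero_zero_zero_mem_B, zero_two_zero_mem_B, hrotate, two_neg_two_zero_mem_B]

lemma mem_B_one_iff :
    (ρ, σ, 1) ∈ B ↔ (ρ, σ) ∈ ({(1, 1), (-1, 1), (1, -1), (3, -1)} : Set (ℝ × ℝ)) := by
  rw [← reflect_mem_B_iff, sub_self, mem_B_zero_iff]
  simp only [Set.mem_insert_iff, Set.mem_singleton_iff, Prod.mk.injEq]
  grind

end SolutionSet

theorem B_sections_at_zero_and_one :
    {p ∈ B | p.2.2 = 0} =
        ({(0, 0, 0), (0, 2, 0), (2, 0, 0), (2, -2, 0)} : Set (ℝ × ℝ × ℝ)) ∧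
      {p ∈ B | p.2.2 = 1} =
        ({(1, 1, 1), (-1, 1, 1), (1, -1, 1), (3, -1, 1)} : Set (ℝ × ℝ × ℝ)) := by
  constructor <;> ext ⟨ρ, σ, τ⟩ <;>
    simp only [Set.mem_sep_iff, Set.mem_insert_iff, Set.mem_singleton_iff, Prod.mk.injEq]
  · grind [@mem_B_zero_iff ρ σ]
  · grind [@mem_B_one_iff ρ σ]
end

section
/- For every τ ∈ ℝ, the matrix M(τ,τ,τ) satisfies M(τ,τ,τ)ᵀ · M(τ,τ,τ) = (τ² − τ + 1)² · I and det M(τ,τ,τ) = (τ² − τ + 1)³. Consequently (τ² − τ + 1)⁻¹ · M(τ,τ,τ) is an orthogonal matrix with determinant 1, i.e. a rotation of ℝ³, and it fixes the vector (1,1,1). -/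
/-!
The matrix `M τ τ τ` is the circulant of `(a, b, c) = (τ (τ - 1), 1 - τ, τ)`, a triple with sum
`s = τ ^ 2 - τ + 1 > 0` for which `a b + b c + c a = 0`. The Gram matrix of a `3 × 3` circulant has
`a ^ 2 + b ^ 2 + c ^ 2` on the diagonal and `a b + b c + c a` off it, and its determinant is
`a ^ 3 + b ^ 3 + c ^ 3 - 3 a b c = s (s ^ 2 - 3 (a b + b c + c a))`, so here they are `s ^ 2 • 1`
and `s ^ 3`. Every row of a circulant sums to `s`, so `(1, 1, 1)` is an eigenvector for `s`, and
dividing by `s` gives the rotation.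
-/

open Matrix

/-- The matrix `M(ρ, σ, τ)`. -/
def M (ρ σ τ : ℝ) : Matrix (Fin 3) (Fin 3) ℝ :=
  !![ρ * (ρ - 1), ρ, 1 - ρ;
     1 - σ, σ * (σ - 1), σ;
     τ, 1 - τ, τ * (τ - 1)]

section Circulant

theorem circulant_mulVec_one {n R : Type*} [Fintype n] [AddGroup n] [NonAssocSemiring R]
    (v : n → R) : circulant v *ᵥ 1 = (∑ i, v i) • 1 := by
  ext i
  simpa [mulVec, dotProduct] using (Equiv.subLeft i).sum_comp v

theorem circulant_fin_three {R : Type*} (a b c : R) :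
    circulant ![a, b, c] = !![a, c, b; b, a, c; c, b, a] := by
  ext i j
  fin_cases i <;> fin_cases j <;> rfl

variable {R : Type*} [CommRing R] (a b c : R)

theorem transpose_mul_self_circulant_fin_three :
    (circulant ![a, b, c])ᵀ * circulant ![a, b, c] =
      circulant ![a ^ 2 + b ^ 2 + c ^ 2, a * b + b * c + c * a, a * b + b * c + c * a] := by
  simp only [circulant_fin_three]
  ext i j
  fin_cases i <;> fin_cases j <;> simp [mul_apply, Fin.sum_univ_three] <;> ring

theorem det_circulant_fin_three :
    (circulant ![a, b, c]).det =
      (a + b + c) * ((a + b + c) ^ 2 - 3 * (a * b + b * c + c * a)) := by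
  rw [circulant_fin_three, det_fin_three]
  simp only [of_apply, cons_val]
  ring

variable {a b c}

theorem transpose_mul_self_circulant_fin_three_eq_smul_one (h : a * b + b * c + c * a = 0) :
    (circulant ![a, b, c])ᵀ * circulant ![a, b, c] = (a + b + c) ^ 2 • 1 := by
  have sum_sq : a ^ 2 + b ^ 2 + c ^ 2 = (a + b + c) ^ 2 := by linear_combination -2 * h
  rw [transpose_mul_self_circulant_fin_three, h, sum_sq, circulant_fin_three, one_fin_three]
  simp

theorem det_circulant_fin_three_eq_pow (h : a * b + b * c + c * a = 0) :
    (circulant ![a, b, c]).det = (a + b + c) ^ 3 := by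
  rw [det_circulant_fin_three, h]
  ring

end Circulant

section Normalization

variable {n K : Type*} [Fintype n] [Field K] {A : Matrix n n K} {s : K}

theorem inv_smul_mulVec_eq_self {v : n → K} (hs : s ≠ 0) (hA : A *ᵥ v = s • v) :
    (s⁻¹ • A) *ᵥ v = v := by
  rw [smul_mulVec, hA, inv_smul_smul₀ hs]

variable [DecidableEq n]

theorem transpose_mul_self_inv_smul_eq_one (hs : s ≠ 0) (hA : Aᵀ * A = s ^ 2 • 1) :
    (s⁻¹ • A)ᵀ * (s⁻¹ • A) = 1 := by
  rw [transpose_smul, smul_mul_smul_comm, hA, smul_smul, ← sq, ← mul_pow, inv_mul_cancel₀ hs,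
    one_pow, one_smul]

theorem det_inv_smul_eq_one (hs : s ≠ 0) (hA : A.det = s ^ Fintype.card n) :
    (s⁻¹ • A).det = 1 := by
  rw [det_smul, hA, ← mul_pow, inv_mul_cancel₀ hs, one_pow]

end Normalization

theorem M_diag_eq_circulant (τ : ℝ) : M τ τ τ = circulant ![τ * (τ - 1), 1 - τ, τ] := by
  rw [circulant_fin_three, M]

theorem M_diag_is_scaled_rotation (τ : ℝ) :
    (M τ τ τ)ᵀ * (M τ τ τ) =
        ((τ ^ 2 - τ + 1) ^ 2) • (1 : Matrix (Fin 3) (Fin 3) ℝ) ∧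
      (M τ τ τ).det = (τ ^ 2 - τ + 1) ^ 3 ∧
      ((τ ^ 2 - τ + 1)⁻¹ • M τ τ τ)ᵀ * ((τ ^ 2 - τ + 1)⁻¹ • M τ τ τ) = 1 ∧
      ((τ ^ 2 - τ + 1)⁻¹ • M τ τ τ).det = 1 ∧
      ((τ ^ 2 - τ + 1)⁻¹ • M τ τ τ).mulVec ![1, 1, 1] = ![1, 1, 1] := by
  have scale_ne_zero : τ ^ 2 - τ + 1 ≠ 0 := by nlinarith [sq_nonneg (2 * τ - 1)]
  have sum_eq : τ * (τ - 1) + (1 - τ) + τ = τ ^ 2 - τ + 1 := by ring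
  have pairwise_sum_eq_zero :
      τ * (τ - 1) * (1 - τ) + (1 - τ) * τ + τ * (τ * (τ - 1)) = 0 := by ring
  have gram : (M τ τ τ)ᵀ * M τ τ τ = (τ ^ 2 - τ + 1) ^ 2 • 1 := by
    rw [M_diag_eq_circulant, ← sum_eq]
    exact transpose_mul_self_circulant_fin_three_eq_smul_one pairwise_sum_eq_zero
  have det_eq : (M τ τ τ).det = (τ ^ 2 - τ + 1) ^ 3 := by
    rw [M_diag_eq_circulant, det_circulant_fin_three_eq_pow pairwise_sum_eq_zero, sum_eq]
  have ones_eq : (![1, 1, 1] : Fin 3 → ℝ) = 1 := by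
    ext i
    fin_cases i <;> rfl
  have mulVec_ones : M τ τ τ *ᵥ ![1, 1, 1] = (τ ^ 2 - τ + 1) • ![1, 1, 1] := by
    rw [M_diag_eq_circulant, ones_eq, circulant_mulVec_one, Fin.sum_univ_three]
    exact congrArg (· • 1) sum_eq
  exact ⟨gram, det_eq, transpose_mul_self_inv_smul_eq_one scale_ne_zero gram,
    det_inv_smul_eq_one scale_ne_zero det_eq, inv_smul_mulVec_eq_self scale_ne_zero mulVec_ones⟩
end

section
/- For every τ ∈ ℝ, the matrix M(τ,τ,τ) maps the cone 𝒬 into itself: if (x,y,z) ∈ 𝒬 then M(τ,τ,τ)·(x,y,z) ∈ 𝒬. -/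
/-- The open cone: the interior, in the first octant, of the cone
`x² + y² + z² = 2(xy + yz + zx)`, as a set of vectors in `Fin 3 → ℝ`. -/
def Q : Set (Fin 3 → ℝ) :=
  {v | 0 < v 0 ∧ 0 < v 1 ∧ 0 < v 2 ∧
    (v 0) ^ 2 + (v 1) ^ 2 + (v 2) ^ 2 <
      2 * (v 0 * v 1 + v 1 * v 2 + v 2 * v 0)}

/-!
Let `q(v) = (∑ vᵢ)² - 2‖v‖²`, which for `v = (x, y, z)` is `2(xy + yz + zx) - (x² + y² + z²)`.
The `i`-th coordinate of `M(ρ₀, ρ₁, ρ₂) v` is a quadratic polynomial in `ρᵢ` with leading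
coefficient `vᵢ` and discriminant `-q(v)`, so it is positive for every `v` in the cone, whatever
the parameters. On the diagonal, `M(τ, τ, τ)` is circulant: its columns are pairwise orthogonal of
norm `τ² - τ + 1`, and each of them sums to `τ² - τ + 1`. It therefore scales both `(∑ vᵢ)²` and
`‖v‖²`, and hence `q`, by the positive factor `(τ² - τ + 1)²`.
-/

open Matrix

section ConeForm

variable {m n R : Type*} [Fintype m] [Fintype n] [CommRing R]

/-- The quadratic form `q(v) = (∑ vᵢ)² - 2 ∑ vᵢ²`, whose positivity defines the cone `Q` inside the
octant. Writing it through the coordinate sum and `v ⬝ᵥ v`, rather than through the products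
`vᵢ vⱼ`, exposes the two quantities that `M τ τ τ` rescales. -/
def coneForm (v : n → R) : R :=
  (∑ i, v i) ^ 2 - 2 * (v ⬝ᵥ v)

lemma coneForm_mulVec [DecidableEq n] {A : Matrix m n R} {s : R}
    (hortho : Aᵀ * A = s ^ 2 • 1) (hsum : 1 ᵥ* A = s • 1) (v : n → R) :
    coneForm (A *ᵥ v) = s ^ 2 * coneForm v := by
  have sum_mulVec : ∑ i, (A *ᵥ v) i = s * ∑ i, v i := by
    rw [← one_dotProduct, dotProduct_mulVec, hsum, smul_dotProduct, one_dotProduct, smul_eq_mul]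
  have dotProduct_self : A *ᵥ v ⬝ᵥ A *ᵥ v = s ^ 2 * (v ⬝ᵥ v) := by
    rw [dotProduct_mulVec, vecMul_mulVec, hortho, vecMul_smul, vecMul_one, smul_dotProduct,
      smul_eq_mul]
  rw [coneForm, coneForm, sum_mulVec, dotProduct_self]
  ring

lemma discrim_eq_neg_coneForm (v : Fin 3 → R) (i : Fin 3) :
    discrim (v i) (v (i + 1) - v i - v (i + 2)) (v (i + 2)) = -coneForm v := by
  fin_cases i <;>
    simp only [discrim, coneForm, vec3_dotProduct, Fin.sum_univ_three, Fin.reduceFinMk,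
      Fin.zero_eta, Fin.mk_one, Fin.isValue, Fin.reduceAdd, zero_add] <;>
    ring

end ConeForm

lemma quadratic_pos_of_discrim_neg {R : Type*} [CommRing R] [LinearOrder R] [IsStrictOrderedRing R]
    {a b c : R} (ha : 0 < a) (h : discrim a b c < 0) (x : R) :
    0 < a * (x * x) + b * x + c := by
  have completed_square : 4 * a * (a * (x * x) + b * x + c) =
      (2 * a * x + b) ^ 2 - discrim a b c := by
    rw [discrim]
    ring
  have : 0 < 4 * a * (a * (x * x) + b * x + c) := by
    rw [completed_square]
    linarith [sq_nonneg (2 * a * x + b)]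
  exact pos_of_mul_pos_right this (by positivity)

lemma mem_Q_iff {v : Fin 3 → ℝ} : v ∈ Q ↔ (∀ i, 0 < v i) ∧ 0 < coneForm v := by
  have coneForm_eq : coneForm v =
      2 * (v 0 * v 1 + v 1 * v 2 + v 2 * v 0) - (v 0 ^ 2 + v 1 ^ 2 + v 2 ^ 2) := by
    simp only [coneForm, dotProduct, Fin.sum_univ_three]
    ring
  simp only [Q, Set.mem_ofPred_eq, coneForm_eq, sub_pos, Fin.forall_fin_succ,
    IsEmpty.forall_iff, Fin.succ_zero_eq_one, Fin.succ_one_eq_two, and_true, and_assoc]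

lemma M_mulVec_apply (ρ v : Fin 3 → ℝ) (i : Fin 3) :
    (M (ρ 0) (ρ 1) (ρ 2) *ᵥ v) i =
      v i * (ρ i * ρ i) + (v (i + 1) - v i - v (i + 2)) * ρ i + v (i + 2) := by
  fin_cases i <;>
    simp only [M, mulVec, vec3_dotProduct, of_apply, cons_val, Fin.reduceFinMk, Fin.zero_eta,
      Fin.mk_one, Fin.isValue, Fin.reduceAdd, zero_add] <;>
    ring

lemma M_mulVec_pos (ρ : Fin 3 → ℝ) {v : Fin 3 → ℝ} (hv : v ∈ Q) (i : Fin 3) :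
    0 < (M (ρ 0) (ρ 1) (ρ 2) *ᵥ v) i := by
  obtain ⟨hpos, hform⟩ := mem_Q_iff.mp hv
  rw [M_mulVec_apply]
  refine quadratic_pos_of_discrim_neg (hpos i) ?_ (ρ i)
  rw [discrim_eq_neg_coneForm]
  exact neg_neg_of_pos hform

lemma M_diag_transpose_mul_self (τ : ℝ) :
    (M τ τ τ)ᵀ * M τ τ τ = (τ ^ 2 - τ + 1) ^ 2 • 1 := by
  have transpose_eq : (M τ τ τ)ᵀ =
      !![τ * (τ - 1), 1 - τ, τ;
         τ, τ * (τ - 1), 1 - τ;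
         1 - τ, τ, τ * (τ - 1)] := eta_fin_three _
  rw [transpose_eq, M, mul_fin_three, one_fin_three]
  ext i j
  fin_cases i <;> fin_cases j <;>
    simp only [Matrix.smul_apply, smul_eq_mul, of_apply, cons_val, Fin.reduceFinMk, Fin.zero_eta,
      Fin.mk_one, Fin.isValue] <;>
    ring

lemma one_vecMul_M_diag (τ : ℝ) : 1 ᵥ* M τ τ τ = (τ ^ 2 - τ + 1) • 1 := by
  ext j
  fin_cases j <;>
    simp only [M, vecMul, vec3_dotProduct, of_apply, cons_val, Fin.reduceFinMk, Fin.zero_eta,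
      Fin.mk_one, Fin.isValue, Pi.one_apply, Pi.smul_apply, smul_eq_mul] <;>
    ring

lemma coneForm_M_diag_mulVec (τ : ℝ) (v : Fin 3 → ℝ) :
    coneForm (M τ τ τ *ᵥ v) = (τ ^ 2 - τ + 1) ^ 2 * coneForm v :=
  coneForm_mulVec (M_diag_transpose_mul_self τ) (one_vecMul_M_diag τ) v

theorem M_diag_preserves_cone (τ : ℝ) (v : Fin 3 → ℝ) (hv : v ∈ Q) :
    (M τ τ τ).mulVec v ∈ Q := by
  have scale_pos : 0 < τ ^ 2 - τ + 1 := by linarith [sq_nonneg (2 * τ - 1)]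
  refine mem_Q_iff.mpr ⟨M_mulVec_pos (fun _ ↦ τ) hv, ?_⟩
  rw [coneForm_M_diag_mulVec]
  exact mul_pos (pow_pos scale_pos 2) (mem_Q_iff.mp hv).2
end

section
/- Let τ ∈ ℝ with τ ≠ 0 and τ ≠ 1, and let M = M(1/(1−τ), 1 − 1/τ, τ). Then M annihilates the two linearly independent vectors (1−τ, 0, 1) and (τ−1, τ, 0), and M·v = λ·v, where v = (τ/(τ−1), 1 − 1/τ, τ(τ−1)) and λ = (τ⁶ − 3τ⁵ + 3τ⁴ − τ³ + 3τ² − 3τ + 1)/((τ−1)²τ²). Moreover λ > 0. -/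
open Matrix

lemma linearIndependent_pair_of_apply_eq_zero {ι R : Type*} [Ring R] [NoZeroDivisors R]
    {x y : ι → R} {i j : ι} (hxi : x i ≠ 0) (hxj : x j = 0) (hyi : y i = 0) (hyj : y j ≠ 0) :
    LinearIndependent R ![x, y] := by
  refine LinearIndependent.pair_iff.mpr fun s t hst ↦ ⟨?_, ?_⟩
  · simpa [hxi, hyi] using congrFun hst i
  · simpa [hxj, hyj] using congrFun hst j

section OrderedField

variable {K : Type*} [Field K] [LinearOrder K] [IsStrictOrderedRing K]

lemma mul_one_sub_le_one_fourth (t : K) : t * (1 - t) ≤ 1 / 4 := by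
  linear_combination four_mul_le_sq_add t (1 - t) / 4

lemma one_sub_three_mul_sub_cube_pos {p : K} (hp : p ≤ 1 / 4) : 0 < 1 - 3 * p - p ^ 3 := by
  have hp3 : p ^ 3 ≤ (1 / 4) ^ 3 := (Odd.pow_le_pow (by decide)).mpr hp
  linear_combination hp3 + 3 * hp

lemma eigenvalue_numerator_pos (τ : K) :
    0 < τ ^ 6 - 3 * τ ^ 5 + 3 * τ ^ 4 - τ ^ 3 + 3 * τ ^ 2 - 3 * τ + 1 := by
  linear_combination one_sub_three_mul_sub_cube_pos (mul_one_sub_le_one_fourth τ)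

end OrderedField

section RankOneFactors

variable {K : Type*} [Field K] {τ : K}

/-- The column factor `v` of the rank-one matrix `M(1 / (1 - τ), 1 - 1 / τ, τ) = v wᵀ`, normalized
to be its third column. -/
def columnFactor (τ : K) : Fin 3 → K :=
  ![τ / (τ - 1), 1 - 1 / τ, τ * (τ - 1)]

/-- The row factor `w` of the rank-one matrix `M(1 / (1 - τ), 1 - 1 / τ, τ) = v wᵀ`, normalized to
have last entry `1`. -/
def rowFactor (τ : K) : Fin 3 → K :=
  ![1 / (τ - 1), -(1 / τ), 1]

lemma rowFactor_dotProduct (τ : K) (u : Fin 3 → K) :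
    rowFactor τ ⬝ᵥ u = u 0 / (τ - 1) - u 1 / τ + u 2 := by
  simp only [rowFactor, vec3_dotProduct, cons_val]
  ring

lemma rowFactor_dotProduct_columnFactor (h0 : τ ≠ 0) (h1 : τ ≠ 1) :
    rowFactor τ ⬝ᵥ columnFactor τ =
      (τ ^ 6 - 3 * τ ^ 5 + 3 * τ ^ 4 - τ ^ 3 + 3 * τ ^ 2 - 3 * τ + 1) /
        ((τ - 1) ^ 2 * τ ^ 2) := by
  have hsub : τ - 1 ≠ 0 := sub_ne_zero.mpr h1
  simp only [rowFactor_dotProduct, columnFactor, cons_val]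
  field

lemma rowFactor_dotProduct_one_sub_zero_one (h1 : τ ≠ 1) : rowFactor τ ⬝ᵥ ![1 - τ, 0, 1] = 0 := by
  have hsub : τ - 1 ≠ 0 := sub_ne_zero.mpr h1
  simp only [rowFactor_dotProduct, cons_val]
  field

lemma rowFactor_dotProduct_sub_one_self_zero (h0 : τ ≠ 0) (h1 : τ ≠ 1) :
    rowFactor τ ⬝ᵥ ![τ - 1, τ, 0] = 0 := by
  have hsub : τ - 1 ≠ 0 := sub_ne_zero.mpr h1
  simp only [rowFactor_dotProduct, cons_val]
  field

end RankOneFactors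

section DegenerateMatrix

variable {τ : ℝ}

lemma M_eq_vecMulVec (h0 : τ ≠ 0) (h1 : τ ≠ 1) :
    M (1 / (1 - τ)) (1 - 1 / τ) τ = vecMulVec (columnFactor τ) (rowFactor τ) := by
  have hsub : τ - 1 ≠ 0 := sub_ne_zero.mpr h1
  have hinv : 1 / (1 - τ) = -(1 / (τ - 1)) := by rw [← neg_sub τ 1, one_div_neg_eq_neg_one_div]
  ext i j
  fin_cases i <;> fin_cases j <;>
    simp only [M, hinv, columnFactor, rowFactor, vecMulVec_apply, of_apply, Fin.zero_eta,
      Fin.mk_one, Fin.reduceFinMk, cons_val] <;>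
    field

lemma M_mulVec_eq_smul (h0 : τ ≠ 0) (h1 : τ ≠ 1) (u : Fin 3 → ℝ) :
    (M (1 / (1 - τ)) (1 - 1 / τ) τ).mulVec u = (rowFactor τ ⬝ᵥ u) • columnFactor τ := by
  rw [M_eq_vecMulVec h0 h1, vecMulVec_mulVec, op_smul_eq_smul]

lemma M_mulVec_eq_zero (h0 : τ ≠ 0) (h1 : τ ≠ 1) {u : Fin 3 → ℝ} (hu : rowFactor τ ⬝ᵥ u = 0) :
    (M (1 / (1 - τ)) (1 - 1 / τ) τ).mulVec u = 0 := by
  rw [M_mulVec_eq_smul h0 h1, hu, zero_smul]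

end DegenerateMatrix

theorem degenerate_matrix_eigenstructure (τ : ℝ) (h0 : τ ≠ 0) (h1 : τ ≠ 1) :
    (M (1 / (1 - τ)) (1 - 1 / τ) τ).mulVec ![1 - τ, 0, 1] = 0 ∧
      (M (1 / (1 - τ)) (1 - 1 / τ) τ).mulVec ![τ - 1, τ, 0] = 0 ∧
      LinearIndependent ℝ ![(![1 - τ, 0, 1] : Fin 3 → ℝ), ![τ - 1, τ, 0]] ∧
      (M (1 / (1 - τ)) (1 - 1 / τ) τ).mulVec
          ![τ / (τ - 1), 1 - 1 / τ, τ * (τ - 1)] =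
        ((τ ^ 6 - 3 * τ ^ 5 + 3 * τ ^ 4 - τ ^ 3 + 3 * τ ^ 2 - 3 * τ + 1) /
            ((τ - 1) ^ 2 * τ ^ 2)) •
          ![τ / (τ - 1), 1 - 1 / τ, τ * (τ - 1)] ∧
      0 < (τ ^ 6 - 3 * τ ^ 5 + 3 * τ ^ 4 - τ ^ 3 + 3 * τ ^ 2 - 3 * τ + 1) /
          ((τ - 1) ^ 2 * τ ^ 2) := by
  have hsub : τ - 1 ≠ 0 := sub_ne_zero.mpr h1
  refine ⟨M_mulVec_eq_zero h0 h1 (rowFactor_dotProduct_one_sub_zero_one h1),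
    M_mulVec_eq_zero h0 h1 (rowFactor_dotProduct_sub_one_self_zero h0 h1),
    linearIndependent_pair_of_apply_eq_zero (i := 2) (j := 1) one_ne_zero rfl rfl h0, ?_,
    div_pos (eigenvalue_numerator_pos τ) (mul_pos (sq_pos_of_ne_zero hsub) (sq_pos_of_ne_zero h0))⟩
  rw [← rowFactor_dotProduct_columnFactor h0 h1]
  exact M_mulVec_eq_smul h0 h1 (columnFactor τ)
end

section
/- The set of real numbers τ satisfying ||τ| − |τ−1|| ≤ |τ² − τ| ≤ |τ| + |τ−1| is exactly the union of the three closed intervals [−φ, −φ⁻¹] ∪ [φ⁻², φ⁻¹] ∪ [φ, φ²], where φ = (1+√5)/2; explicitly, [(−1−√5)/2, (1−√5)/2] ∪ [(3−√5)/2, (−1+√5)/2] ∪ [(1+√5)/2, (3+√5)/2]. -/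
open Set
open scoped Pointwise goldenRatio

section AreTriangleSides

variable {G : Type*} [AddCommGroup G] [LinearOrder G] {a b c : G}

/-- The elements `a`, `b`, `c` of an ordered group satisfy the three triangle inequalities, and so
are the side lengths of a possibly degenerate triangle. The form with an absolute value is the one
in which the key inequality is written. -/
def AreTriangleSides (a b c : G) : Prop :=
  |a - b| ≤ c ∧ c ≤ a + b

theorem areTriangleSides_comm : AreTriangleSides a b c ↔ AreTriangleSides b a c := by
  rw [AreTriangleSides, AreTriangleSides, abs_sub_comm, add_comm]

theorem areTriangleSides_right_comm [IsOrderedAddMonoid G] :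
    AreTriangleSides a b c ↔ AreTriangleSides a c b := by
  simp only [AreTriangleSides, abs_sub_le_iff, sub_le_iff_le_add, add_comm]
  tauto

theorem areTriangleSides_mul_left_iff {R : Type*} [Ring R] [LinearOrder R] [IsStrictOrderedRing R]
    {r a b c : R} (hr : 0 < r) :
    AreTriangleSides (r * a) (r * b) (r * c) ↔ AreTriangleSides a b c := by
  rw [AreTriangleSides, ← mul_sub, abs_mul, abs_of_pos hr, ← mul_add,
    mul_le_mul_iff_right₀ hr, mul_le_mul_iff_right₀ hr, AreTriangleSides]

end AreTriangleSides

section TriangleSet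

/-- The solution set of the key inequality, in a linearly ordered ring. -/
def triangleSet (R : Type*) [Ring R] [LinearOrder R] : Set R :=
  {τ | AreTriangleSides |τ| |τ - 1| |τ ^ 2 - τ|}

theorem preimage_one_sub_triangleSet (R : Type*) [Ring R] [LinearOrder R] :
    (1 - ·) ⁻¹' triangleSet R = triangleSet R := by
  ext τ
  have hsub : |1 - τ - 1| = |τ| := by rw [sub_sub_cancel_left, abs_neg]
  have hsq : (1 - τ) ^ 2 - (1 - τ) = τ ^ 2 - τ := by noncomm_ring
  simp only [triangleSet, mem_preimage, mem_ofPred_eq]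
  rw [hsub, hsq, abs_sub_comm 1 τ, areTriangleSides_comm]

variable {K : Type*} [Field K] [LinearOrder K] [IsStrictOrderedRing K]

theorem inv_triangleSet : (triangleSet K)⁻¹ = triangleSet K := by
  ext τ
  obtain rfl | hτ := eq_or_ne τ 0
  · rw [Set.mem_inv, inv_zero]
  have mul_abs (x : K) : τ ^ 2 * |x| = |τ ^ 2 * x| := by rw [abs_mul, abs_sq]
  have hself : τ ^ 2 * |τ⁻¹| = |τ| := by
    rw [mul_abs]; congr 1; field_simp
  have hsub : τ ^ 2 * |τ⁻¹ - 1| = |τ ^ 2 - τ| := by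
    rw [mul_abs, abs_sub_comm (τ ^ 2) τ]; congr 1; field_simp
  have hsq : τ ^ 2 * |τ⁻¹ ^ 2 - τ⁻¹| = |τ - 1| := by
    rw [mul_abs, abs_sub_comm τ 1]; congr 1; field_simp
  simp only [triangleSet, Set.mem_inv, mem_ofPred_eq]
  rw [← areTriangleSides_mul_left_iff (sq_pos_of_ne_zero hτ), hself, hsub, hsq,
    areTriangleSides_right_comm]

theorem triangleSet_eq_union_inter : triangleSet K =
    triangleSet K ∩ Iio 0 ∪ triangleSet K ∩ Ioo 0 1 ∪ triangleSet K ∩ Ioi 1 := by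
  have zero_notMem : (0 : K) ∉ triangleSet K := by simp [triangleSet, AreTriangleSides]
  have one_notMem : (1 : K) ∉ triangleSet K := by simp [triangleSet, AreTriangleSides]
  grind

theorem triangleSet_inter_Iio_zero :
    triangleSet K ∩ Iio 0 = (1 - ·) ⁻¹' (triangleSet K ∩ Ioi 1) := by
  rw [preimage_inter, preimage_one_sub_triangleSet, preimage_const_sub_Ioi, sub_self]

theorem triangleSet_inter_Ioo_zero_one :
    triangleSet K ∩ Ioo 0 1 = (triangleSet K ∩ Ioi 1)⁻¹ := by
  rw [inter_inv, inv_triangleSet, inv_Ioi₀ one_pos, inv_one]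

theorem mem_triangleSet_iff_of_one_lt {τ : K} (hτ : 1 < τ) :
    τ ∈ triangleSet K ↔ 1 ≤ τ ^ 2 - τ ∧ τ ^ 2 - τ ≤ 2 * τ - 1 := by
  have hsq : 0 ≤ τ ^ 2 - τ := by nlinarith
  rw [triangleSet, mem_ofPred_eq, AreTriangleSides, abs_of_pos (one_pos.trans hτ),
    abs_of_pos (sub_pos.mpr hτ), abs_of_nonneg hsq, sub_sub_cancel, abs_one, two_mul, add_sub_assoc]

end TriangleSet

theorem inv_Icc_of_pos {K : Type*} [Field K] [LinearOrder K] [IsStrictOrderedRing K] {a b : K}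
    (ha : 0 < a) (hb : 0 < b) : (Icc a b)⁻¹ = Icc b⁻¹ a⁻¹ := by
  ext x
  simp only [Set.mem_inv, mem_Icc]
  constructor
  · rintro ⟨hax, hxb⟩
    have hx : 0 < x := inv_pos.mp (ha.trans_le hax)
    exact ⟨inv_le_of_inv_le₀ hx hxb, le_inv_of_le_inv₀ ha hax⟩
  · rintro ⟨hbx, hxa⟩
    have hx : 0 < x := (inv_pos.mpr hb).trans_le hbx
    exact ⟨le_inv_of_le_inv₀ hx hxa, inv_le_of_inv_le₀ hb hbx⟩

theorem one_le_sq_sub_self_iff {τ : ℝ} (hτ : 0 < τ) : 1 ≤ τ ^ 2 - τ ↔ φ ≤ τ := by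
  have hfactor : τ ^ 2 - τ - 1 = (τ - φ) * (τ - ψ) := by
    linear_combination τ * Real.goldenRatio_add_goldenConj - Real.goldenRatio_mul_goldenConj
  have hpos : 0 < τ - ψ := sub_pos.mpr (Real.goldenConj_neg.trans hτ)
  rw [← sub_nonneg, hfactor, mul_nonneg_iff_of_pos_right hpos, sub_nonneg]

theorem sq_sub_self_le_iff {τ : ℝ} (hτ : 1 ≤ τ) : τ ^ 2 - τ ≤ 2 * τ - 1 ↔ τ ≤ φ ^ 2 := by
  have hfactor : 2 * τ - 1 - (τ ^ 2 - τ) = (φ ^ 2 - τ) * (τ - ψ ^ 2) := by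
    rw [Real.goldenRatio_sq, Real.goldenConj_sq]
    linear_combination (1 - τ) * Real.goldenRatio_add_goldenConj + Real.goldenRatio_mul_goldenConj
  have hpos : 0 < τ - ψ ^ 2 := by linarith [Real.goldenConj_sq, Real.goldenConj_neg]
  rw [← sub_nonneg, hfactor, mul_nonneg_iff_of_pos_right hpos, sub_nonneg]

theorem triangleSet_inter_Ioi_one : triangleSet ℝ ∩ Ioi 1 = Icc φ (φ ^ 2) := by
  ext τ
  have mem_iff (hτ : 1 < τ) : τ ∈ triangleSet ℝ ↔ τ ∈ Icc φ (φ ^ 2) := by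
    rw [mem_triangleSet_iff_of_one_lt hτ, one_le_sq_sub_self_iff (one_pos.trans hτ),
      sq_sub_self_le_iff hτ.le, mem_Icc]
  constructor
  · rintro ⟨hmem, hτ⟩
    exact (mem_iff hτ).mp hmem
  · intro hmem
    have hτ : 1 < τ := Real.one_lt_goldenRatio.trans_le hmem.1
    exact ⟨(mem_iff hτ).mpr hmem, hτ⟩

theorem triangleSet_real :
    triangleSet ℝ = Icc (-φ) (-φ⁻¹) ∪ Icc (φ ^ 2)⁻¹ φ⁻¹ ∪ Icc φ (φ ^ 2) := by
  have one_sub_sq : 1 - φ ^ 2 = -φ := by rw [Real.goldenRatio_sq]; ring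
  have one_sub : 1 - φ = -φ⁻¹ := by rw [Real.one_sub_goldenConj, Real.inv_goldenRatio, neg_neg]
  rw [triangleSet_eq_union_inter, triangleSet_inter_Iio_zero, triangleSet_inter_Ioo_zero_one,
    triangleSet_inter_Ioi_one, preimage_const_sub_Icc, one_sub_sq, one_sub,
    inv_Icc_of_pos Real.goldenRatio_pos (pow_pos Real.goldenRatio_pos 2)]

theorem phi_eq_goldenRatio : phi = φ := rfl

theorem key_inequality_solution_set :
    {τ : ℝ | abs (|τ| - |τ - 1|) ≤ |τ ^ 2 - τ| ∧ |τ ^ 2 - τ| ≤ |τ| + |τ - 1|} =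
        Set.Icc (-phi) (-phi⁻¹) ∪ Set.Icc (phi ^ 2)⁻¹ phi⁻¹ ∪
          Set.Icc phi (phi ^ 2) ∧
      Set.Icc (-phi) (-phi⁻¹) ∪ Set.Icc (phi ^ 2)⁻¹ phi⁻¹ ∪
          Set.Icc phi (phi ^ 2) =
        Set.Icc ((-1 - Real.sqrt 5) / 2) ((1 - Real.sqrt 5) / 2) ∪
          Set.Icc ((3 - Real.sqrt 5) / 2) ((-1 + Real.sqrt 5) / 2) ∪
          Set.Icc ((1 + Real.sqrt 5) / 2) ((3 + Real.sqrt 5) / 2) := by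
  rw [phi_eq_goldenRatio]
  refine ⟨triangleSet_real, ?_⟩
  have inv_eq : φ⁻¹ = (-1 + √5) / 2 := by rw [Real.inv_goldenRatio]; ring
  have neg_inv_eq : -φ⁻¹ = (1 - √5) / 2 := by rw [Real.inv_goldenRatio, neg_neg]
  have inv_sq_eq : (φ ^ 2)⁻¹ = (3 - √5) / 2 := by
    rw [← inv_pow, Real.inv_goldenRatio, neg_sq, Real.goldenConj_sq]; ring
  have sq_eq : φ ^ 2 = (3 + √5) / 2 := by rw [Real.goldenRatio_sq]; ring
  have neg_eq : -φ = (-1 - √5) / 2 := by ring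
  rw [neg_inv_eq, inv_sq_eq, inv_eq, sq_eq, neg_eq]
end
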